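/- Let v be a norm on ℝ^n invariant under coordinate permutations with dual norm v*, and let f : P_n → ℝ be a differentiable function that is geodesically convex (t ↦ f(X^{1/2} e^{tS} X^{1/2}) is convex for every X ∈ P_n and Hermitian S). For Hermitian H, define the recession function f^∞(H) := lim_{t→∞} (f(e^{tH}) − f(I))/t ∈ ℝ ∪ {+∞} (the limit exists by convexity). Then inf_{X ∈ P_n} ‖X^{1/2} ∇f(X) X^{1/2}‖_{v*} = sup { −f^∞(H) : H Hermitian, ‖H‖_v ≤ 1 }, where ∇f(X) is the Hermitian matrix representing the differential of f at X via the trace pairing. -/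

import Mathlib

noncomputable section
open scoped Classical
open Matrix Filter
open scoped ComplexOrder Topology

/-- `v(λ(H))` for Hermitian `H` (junk value `0` otherwise). -/
def vnorm {n : ℕ} (v : (Fin n → ℝ) → ℝ) (H : Matrix (Fin n) (Fin n) ℂ) : ℝ :=
  if h : H.IsHermitian then v h.eigenvalues else 0

/-- The positive semidefinite square root (junk value `0` off PSD matrices). -/
def matSqrt {n : ℕ} (X : Matrix (Fin n) (Fin n) ℂ) : Matrix (Fin n) (Fin n) ℂ :=
  if h : X.PosSemidef then
    h.1.eigenvectorUnitary.1 * diagonal ((↑) ∘ Real.sqrt ∘ h.1.eigenvalues) *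
      (star h.1.eigenvectorUnitary : Matrix (Fin n) (Fin n) ℂ)
  else 0

/-- real diagonal matrix -/
abbrev Dg {n : ℕ} (h : Fin n → ℝ) : Matrix (Fin n) (Fin n) ℂ := diagonal (fun i => (h i : ℂ))

/-- `U diag(h) U*` -/
def cj {n : ℕ} (U : Matrix (Fin n) (Fin n) ℂ) (h : Fin n → ℝ) : Matrix (Fin n) (Fin n) ℂ :=
  U * Dg h * Uᴴ

/-- unitarity -/
def IsU {n : ℕ} (U : Matrix (Fin n) (Fin n) ℂ) : Prop := Uᴴ * U = 1 ∧ U * Uᴴ = 1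

lemma perm_of_multiset {n : ℕ} (f g : Fin n → ℝ)
    (h : Multiset.map f Finset.univ.val = Multiset.map g Finset.univ.val) :
    ∃ σ : Equiv.Perm (Fin n), f = g ∘ σ := by
  have h1 : (List.ofFn f).Perm (List.ofFn g) := by
    rw [Fin.univ_val_map, Fin.univ_val_map] at h
    exact Multiset.coe_eq_coe.1 h
  have h2 : (List.ofFn (f ∘ Tuple.sort f)).Perm (List.ofFn (g ∘ Tuple.sort g)) :=
    ((Equiv.Perm.ofFn_comp_perm _ _).trans h1).trans (Equiv.Perm.ofFn_comp_perm _ _).symm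
  have h3 : f ∘ Tuple.sort f = g ∘ Tuple.sort g := by
    apply List.ofFn_injective
    exact h2.eq_of_sortedLE (Tuple.monotone_sort f).sortedLE_ofFn
      (Tuple.monotone_sort g).sortedLE_ofFn
  refine ⟨(Tuple.sort f).symm.trans (Tuple.sort g), ?_⟩
  funext i
  have := congrFun h3 ((Tuple.sort f).symm i)
  simpa using this

lemma cj_herm {n : ℕ} (U : Matrix (Fin n) (Fin n) ℂ) (h : Fin n → ℝ) : (cj U h).IsHermitian := by
  unfold cj Dg Matrix.IsHermitian
  rw [conjTranspose_mul, conjTranspose_mul, conjTranspose_conjTranspose, diagonal_conjTranspose]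
  have : (star fun i => (h i : ℂ)) = fun i => (h i : ℂ) := by
    funext i; simp
  rw [this, Matrix.mul_assoc]

lemma charpoly_cj {n : ℕ} {U : Matrix (Fin n) (Fin n) ℂ} (hU : IsU U) (h : Fin n → ℝ) :
    (cj U h).charpoly = ∏ i, (Polynomial.X - Polynomial.C (h i : ℂ)) := by
  unfold cj
  rw [charpoly_mul_comm, ← Matrix.mul_assoc, hU.1, Matrix.one_mul, charpoly_diagonal]

lemma vnorm_cj {n : ℕ} {U : Matrix (Fin n) (Fin n) ℂ} (hU : IsU U) (h : Fin n → ℝ)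
    (w : (Fin n → ℝ) → ℝ) (hw : ∀ (σ : Equiv.Perm (Fin n)) (x : Fin n → ℝ), w (x ∘ σ) = w x) :
    vnorm w (cj U h) = w h := by
  unfold vnorm
  rw [dif_pos (cj_herm U h)]
  have h1 := (cj_herm U h).roots_charpoly_eq_eigenvalues
  rw [charpoly_cj hU, Polynomial.roots_prod _ _
    (by simp [Finset.prod_ne_zero_iff, Polynomial.X_sub_C_ne_zero])] at h1
  simp only [Polynomial.roots_X_sub_C, Multiset.bind_singleton] at h1
  have h2 := congrArg (Multiset.map Complex.re) h1
  rw [Multiset.map_map, Multiset.map_map] at h2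
  obtain ⟨σ, hσ⟩ := perm_of_multiset h (cj_herm U h).eigenvalues (by
    simpa [Function.comp_def] using h2)
  conv_rhs => rw [hσ]
  rw [hw]

lemma spec {n : ℕ} {H : Matrix (Fin n) (Fin n) ℂ} (hH : H.IsHermitian) :
    ∃ U h, IsU U ∧ Antitone h ∧ H = cj U h := by
  set V : Matrix (Fin n) (Fin n) ℂ := hH.eigenvectorUnitary.1 with hV
  have hV1 : Vᴴ * V = 1 := by
    have := Unitary.star_mul_self_of_mem hH.eigenvectorUnitary.2
    simpa [star_eq_conjTranspose] using this
  have hV2 : V * Vᴴ = 1 := mul_eq_one_comm.1 hV1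
  set e := hH.eigenvalues
  have hs : H = V * diagonal (fun i => (e i : ℂ)) * Vᴴ := by
    have := hH.spectral_theorem
    rw [Unitary.conjStarAlgAut_apply] at this
    exact this
  set σ := Tuple.sort (fun i => - e i)
  have hσ : Antitone (e ∘ σ) := by
    intro i j hij
    have := Tuple.monotone_sort (fun i => - e i) hij
    simpa using this
  have hW : IsU (V.submatrix id σ) := by
    have h1 : (V.submatrix id σ)ᴴ * V.submatrix id σ = 1 := by
      rw [conjTranspose_submatrix]
      have h2 := submatrix_mul_equiv Vᴴ V σ (Equiv.refl _) σ
      exact h2.trans (by rw [hV1]; simp)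
    exact ⟨h1, mul_eq_one_comm.1 h1⟩
  refine ⟨_, e ∘ σ, hW, hσ, ?_⟩
  unfold cj Dg
  have : diagonal (fun i => (((e ∘ σ) i : ℝ) : ℂ)) = (diagonal (fun i => (e i : ℂ))).submatrix σ σ := by
    rw [submatrix_diagonal_equiv]; rfl
  rw [this, conjTranspose_submatrix, submatrix_mul_equiv, submatrix_mul_equiv, submatrix_id_id]
  exact hs

lemma exp_cj {n : ℕ} {U : Matrix (Fin n) (Fin n) ℂ} (hU : IsU U) (h : Fin n → ℝ) :
    NormedSpace.exp (cj U h) = cj U (fun i => Real.exp (h i)) := by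
  have hinv : U⁻¹ = Uᴴ := inv_eq_left_inv hU.1
  have hu : IsUnit U := ⟨⟨U, Uᴴ, hU.2, hU.1⟩, rfl⟩
  unfold cj
  rw [← hinv, Matrix.exp_conj _ _ hu, Matrix.exp_diagonal]
  congr 3
  funext i
  rw [Pi.exp_def]
  simp [← Complex.exp_eq_exp_ℂ]

lemma smul_cj {n : ℕ} (U : Matrix (Fin n) (Fin n) ℂ) (h : Fin n → ℝ) (t : ℝ) :
    t • cj U h = cj U (t • h) := by
  unfold cj
  have : Dg (t • h) = t • Dg h := by
    ext i j
    by_cases hij : i = j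
    · subst hij; simp [Dg]
    · simp [Dg, hij]
  rw [this, Matrix.mul_smul, Matrix.smul_mul]

lemma Dg_mul {n : ℕ} (a b : Fin n → ℝ) : Dg a * Dg b = Dg (fun i => a i * b i) := by
  unfold Dg; rw [diagonal_mul_diagonal]; congr 1; funext i; push_cast; rfl

lemma cj_mul {n : ℕ} {U : Matrix (Fin n) (Fin n) ℂ} (hU : IsU U) (a b : Fin n → ℝ) :
    cj U a * cj U b = cj U (fun i => a i * b i) := by
  unfold cj
  rw [← Dg_mul]
  calc U * Dg a * Uᴴ * (U * Dg b * Uᴴ) = U * Dg a * (Uᴴ * U) * Dg b * Uᴴ := by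
        simp only [Matrix.mul_assoc]
    _ = _ := by rw [hU.1]; simp only [Matrix.mul_assoc, Matrix.one_mul]

lemma cj_one {n : ℕ} {U : Matrix (Fin n) (Fin n) ℂ} (hU : IsU U) : cj U (fun _ => 1) = 1 := by
  unfold cj Dg; simp [hU.2]

lemma quad_cj {n : ℕ} (U : Matrix (Fin n) (Fin n) ℂ) (h : Fin n → ℝ) (x : Fin n → ℂ) :
    (star x ⬝ᵥ (cj U h *ᵥ x)) = ((∑ i, h i * ‖(Uᴴ *ᵥ x) i‖ ^ 2 : ℝ) : ℂ) := by
  unfold cj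
  rw [← Matrix.mulVec_mulVec, ← Matrix.mulVec_mulVec, Matrix.dotProduct_mulVec]
  have : star x ᵥ* U = star (Uᴴ *ᵥ x) := by
    rw [star_mulVec, conjTranspose_conjTranspose]
  rw [this]
  push_cast
  simp only [dotProduct]
  refine Finset.sum_congr rfl fun i _ => ?_
  rw [mulVec_diagonal]
  have := Complex.conj_mul' ((Uᴴ *ᵥ x) i)
  simp only [Pi.star_apply, RCLike.star_def]
  rw [← this]; ring

lemma cj_posDef {n : ℕ} {U : Matrix (Fin n) (Fin n) ℂ} (hU : IsU U) {h : Fin n → ℝ}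
    (hp : ∀ i, 0 < h i) : (cj U h).PosDef := by
  have hu : IsUnit U := ⟨⟨U, Uᴴ, hU.2, hU.1⟩, rfl⟩
  have hd : (Dg h).PosDef := by
    apply Matrix.PosDef.diagonal
    intro i; exact_mod_cast hp i
  unfold cj
  exact (IsUnit.posDef_star_right_conjugate_iff hu).2 hd

lemma posDef_log {n : ℕ} {M : Matrix (Fin n) (Fin n) ℂ} (hM : M.PosDef) :
    ∃ U h, IsU U ∧ Antitone h ∧ M = cj U (fun i => Real.exp (h i)) := by
  obtain ⟨U, h, hU, ha, rfl⟩ := spec hM.1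
  have hp : ∀ i, 0 < h i := by
    intro i
    have hd : (Dg h).PosDef := by
      have hu : IsUnit U := ⟨⟨U, Uᴴ, hU.2, hU.1⟩, rfl⟩
      exact (IsUnit.posDef_star_right_conjugate_iff hu).1 hM
    have := hd.diag_pos (i := i)
    simpa [Dg] using this
  refine ⟨U, fun i => Real.log (h i), hU, ?_, ?_⟩
  · intro i j hij
    exact Real.log_le_log (hp j) (ha hij)
  · congr 1; funext i; rw [Real.exp_log (hp i)]

lemma exp_posDef {n : ℕ} {H : Matrix (Fin n) (Fin n) ℂ} (hH : H.IsHermitian) :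
    (NormedSpace.exp H).PosDef := by
  obtain ⟨U, h, hU, ha, rfl⟩ := spec hH
  rw [exp_cj hU]
  exact cj_posDef hU fun i => Real.exp_pos _

lemma matSqrt_spec {n : ℕ} {X : Matrix (Fin n) (Fin n) ℂ} (hX : X.PosDef) :
    (matSqrt X).PosDef ∧ matSqrt X * matSqrt X = X := by
  have h := hX.posSemidef
  unfold matSqrt
  rw [dif_pos h]
  set V : Matrix (Fin n) (Fin n) ℂ := h.1.eigenvectorUnitary.1 with hV
  have hV1 : Vᴴ * V = 1 := by
    have := Unitary.star_mul_self_of_mem h.1.eigenvectorUnitary.2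
    simpa [star_eq_conjTranspose] using this
  have hV2 : V * Vᴴ = 1 := mul_eq_one_comm.1 hV1
  have hs : X = cj V h.1.eigenvalues := by
    have := h.1.spectral_theorem
    rw [Unitary.conjStarAlgAut_apply] at this
    exact this
  have hp : ∀ i, 0 < h.1.eigenvalues i := hX.eigenvalues_pos
  change (cj V (fun i => Real.sqrt (h.1.eigenvalues i))).PosDef ∧
    cj V (fun i => Real.sqrt (h.1.eigenvalues i)) * cj V (fun i => Real.sqrt (h.1.eigenvalues i)) = X
  refine ⟨cj_posDef ⟨hV1, hV2⟩ fun i => Real.sqrt_pos.2 (hp i), ?_⟩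
  rw [cj_mul ⟨hV1, hV2⟩]
  conv_rhs => rw [hs]
  congr 1
  funext i
  exact Real.mul_self_sqrt (hp i).le

lemma norm_U {n : ℕ} {U : Matrix (Fin n) (Fin n) ℂ} (hU : IsU U) (x : Fin n → ℂ) :
    ∑ i, ‖(Uᴴ *ᵥ x) i‖ ^ 2 = ∑ i, ‖x i‖ ^ 2 := by
  have h := quad_cj U (fun _ => 1) x
  rw [cj_one hU, one_mulVec] at h
  have h2 : star x ⬝ᵥ x = ((∑ i, ‖x i‖ ^ 2 : ℝ) : ℂ) := by
    simp only [dotProduct]; push_cast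
    refine Finset.sum_congr rfl fun i _ => ?_
    simpa using Complex.conj_mul' (x i)
  rw [h2] at h
  have h3 := Complex.ofReal_injective h
  simpa using h3.symm

/-- Weyl monotonicity. -/
lemma weyl {n : ℕ} {U W : Matrix (Fin n) (Fin n) ℂ} (hU : IsU U) (hW : IsU W)
    {a b : Fin n → ℝ} (ha : Antitone a) (hb : Antitone b)
    (h : (cj W b - cj U a).PosSemidef) (i : Fin n) : a i ≤ b i := by
  let T : (Fin n → ℂ) →ₗ[ℂ] (Fin n → ℂ) := LinearMap.pi fun j =>
    if i < j then (LinearMap.proj j).comp (Matrix.mulVecLin Uᴴ)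
    else if j < i then (LinearMap.proj j).comp (Matrix.mulVecLin Wᴴ) else 0
  have hT : ¬ Function.Injective T := by
    rw [LinearMap.injective_iff_surjective]
    intro hs
    obtain ⟨x, hx⟩ := hs (fun _ => 1)
    have := congrFun hx i
    simp [T] at this
  have : ∃ x, T x = 0 ∧ x ≠ 0 := by
    by_contra hcon
    push Not at hcon
    exact hT ((injective_iff_map_eq_zero T).2 hcon)
  obtain ⟨x, hx, hx0⟩ := this
  have h1 : ∀ j, i < j → (Uᴴ *ᵥ x) j = 0 := by
    intro j hj
    have := congrFun hx j
    simpa [T, hj] using this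
  have h2 : ∀ j, j < i → (Wᴴ *ᵥ x) j = 0 := by
    intro j hj
    have := congrFun hx j
    simpa [T, hj, not_lt.2 hj.le] using this
  have hq := h.dotProduct_mulVec_nonneg x
  rw [Matrix.sub_mulVec, dotProduct_sub, quad_cj, quad_cj, ← Complex.ofReal_sub] at hq
  have hq' : 0 ≤ (∑ j, b j * ‖(Wᴴ *ᵥ x) j‖ ^ 2) - ∑ j, a j * ‖(Uᴴ *ᵥ x) j‖ ^ 2 := by
    exact_mod_cast hq
  have h3 : a i * ∑ j, ‖x j‖ ^ 2 ≤ ∑ j, a j * ‖(Uᴴ *ᵥ x) j‖ ^ 2 := by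
    rw [← norm_U hU, Finset.mul_sum]
    refine Finset.sum_le_sum fun j _ => ?_
    by_cases hj : i < j
    · simp [h1 j hj]
    · exact mul_le_mul_of_nonneg_right (ha (not_lt.1 hj)) (by positivity)
  have h4 : ∑ j, b j * ‖(Wᴴ *ᵥ x) j‖ ^ 2 ≤ b i * ∑ j, ‖x j‖ ^ 2 := by
    rw [← norm_U hW, Finset.mul_sum]
    refine Finset.sum_le_sum fun j _ => ?_
    by_cases hj : j < i
    · simp [h2 j hj]
    · exact mul_le_mul_of_nonneg_right (hb (not_lt.1 hj)) (by positivity)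
  have h5 : 0 < ∑ j, ‖x j‖ ^ 2 := by
    obtain ⟨j, hj⟩ := Function.ne_iff.1 hx0
    refine Finset.sum_pos' (fun _ _ => by positivity) ⟨j, Finset.mem_univ _, ?_⟩
    have : 0 < ‖x j‖ := norm_pos_iff.2 hj
    positivity
  exact le_of_mul_le_mul_right (by linarith) h5

lemma det_cj {n : ℕ} {U : Matrix (Fin n) (Fin n) ℂ} (hU : IsU U) (h : Fin n → ℝ) :
    (cj U (fun i => Real.exp (h i))).det = ((Real.exp (∑ i, h i) : ℝ) : ℂ) := by
  unfold cj
  rw [det_mul_comm, ← Matrix.mul_assoc, hU.1, Matrix.one_mul, det_diagonal, Real.exp_sum]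
  push_cast; rfl

lemma cj_sub {n : ℕ} (U : Matrix (Fin n) (Fin n) ℂ) (a b : Fin n → ℝ) :
    cj U a - cj U b = cj U (fun i => a i - b i) := by
  unfold cj
  have : Dg (fun i => a i - b i) = Dg a - Dg b := by
    unfold Dg
    rw [diagonal_sub]; congr 1; funext i; push_cast; rfl
  rw [this, Matrix.mul_sub, Matrix.sub_mul]

lemma cj_psd {n : ℕ} {U : Matrix (Fin n) (Fin n) ℂ} {h : Fin n → ℝ}
    (hp : ∀ i, 0 ≤ h i) : (cj U h).PosSemidef := by
  have hd : (Dg h).PosSemidef := by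
    apply Matrix.PosSemidef.diagonal
    intro i
    have := hp i
    simpa using this
  unfold cj
  exact hd.mul_mul_conjTranspose_same U

lemma det_sum {n : ℕ} {A U W V : Matrix (Fin n) (Fin n) ℂ}
    (hU : IsU U) (hW : IsU W) (hV : IsU V) {x y z : Fin n → ℝ}
    (hA2 : A * A = cj U (fun i => Real.exp (y i)))
    (hAE : A * cj W (fun i => Real.exp (z i)) * A = cj V (fun i => Real.exp (x i))) :
    ∑ i, x i = ∑ i, y i + ∑ i, z i := by
  have h1 := congrArg Matrix.det hAE
  have h2 := congrArg Matrix.det hA2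
  rw [det_cj hU, det_mul] at h2
  rw [det_mul, det_mul, det_cj hW, det_cj hV] at h1
  have h3 : ((Real.exp (∑ i, y i) * Real.exp (∑ i, z i) : ℝ) : ℂ) = (Real.exp (∑ i, x i) : ℝ) := by
    rw [← h1]; push_cast; push_cast at h2; rw [← h2]; ring
  have h4 := Complex.ofReal_injective h3
  rw [← Real.exp_add] at h4
  exact (Real.exp_injective h4).symm

lemma lidskii {n : ℕ} {A U W V : Matrix (Fin n) (Fin n) ℂ} (hA : A.PosDef)
    (hU : IsU U) (hW : IsU W) (hV : IsU V) {x y z : Fin n → ℝ}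
    (hx : Antitone x) (hy : Antitone y)
    (hA2 : A * A = cj U (fun i => Real.exp (y i)))
    (hAE : A * cj W (fun i => Real.exp (z i)) * A = cj V (fun i => Real.exp (x i)))
    (τ : ℝ) (I : Finset (Fin n)) :
    ∑ i ∈ I, (x i - y i) ≤ ∑ i, max (z i - τ) 0 + I.card * τ := by
  have hAu : IsUnit A := hA.isUnit
  have hAh : Aᴴ = A := hA.1
  have hP : (A * cj W (fun i => Real.exp (max (z i) τ)) * A).PosDef := by
    have := (IsUnit.posDef_star_right_conjugate_iff hAu).2
      (cj_posDef hW (h := fun i => Real.exp (max (z i) τ)) fun i => Real.exp_pos _)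
    rwa [star_eq_conjTranspose, hAh] at this
  obtain ⟨V', x', hV', hx', hE⟩ := posDef_log hP
  have e1 : ∀ i, x i ≤ x' i := by
    intro i
    have := weyl hV hV' (a := fun i => Real.exp (x i)) (b := fun i => Real.exp (x' i))
      (fun i j h => Real.exp_le_exp.2 (hx h)) (fun i j h => Real.exp_le_exp.2 (hx' h)) (by
        rw [← hE, ← hAE, ← Matrix.sub_mul, ← Matrix.mul_sub, cj_sub]
        have := (cj_psd (U := W) (h := fun i => Real.exp (max (z i) τ) - Real.exp (z i))
          (fun i => sub_nonneg.2 (Real.exp_le_exp.2 (le_max_left _ _)))).mul_mul_conjTranspose_same A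
        rwa [hAh] at this) i
    exact Real.exp_le_exp.1 this
  have e2 : ∀ i, y i + τ ≤ x' i := by
    intro i
    have := weyl hU hV' (a := fun i => Real.exp (y i + τ)) (b := fun i => Real.exp (x' i))
      (fun i j h => Real.exp_le_exp.2 (by linarith [hy h])) (fun i j h => Real.exp_le_exp.2 (hx' h)) (by
        have h1 : cj U (fun i => Real.exp (y i + τ)) = A * cj W (fun _ => Real.exp τ) * A := by
          have h2 : (fun i => Real.exp (y i + τ)) = Real.exp τ • fun i => Real.exp (y i) := by
            funext i; simp [Real.exp_add, mul_comm]
          have h3 : (fun _ : Fin n => Real.exp τ) = Real.exp τ • fun _ => 1 := by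
            funext i; simp
          rw [h2, h3, ← smul_cj, ← smul_cj, cj_one hW, ← hA2]
          simp
        rw [← hE, h1, ← Matrix.sub_mul, ← Matrix.mul_sub, cj_sub]
        have := (cj_psd (U := W) (h := fun i => Real.exp (max (z i) τ) - Real.exp τ)
          (fun i => sub_nonneg.2 (Real.exp_le_exp.2 (le_max_right _ _)))).mul_mul_conjTranspose_same A
        rwa [hAh] at this) i
    exact Real.exp_le_exp.1 this
  have e3 := det_sum hU hW hV' hA2 hE
  calc ∑ i ∈ I, (x i - y i) ≤ ∑ i ∈ I, ((x' i - y i - τ) + τ) :=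
        Finset.sum_le_sum fun i _ => by linarith [e1 i]
    _ = ∑ i ∈ I, (x' i - y i - τ) + I.card * τ := by
        rw [Finset.sum_add_distrib]; simp
    _ ≤ ∑ i, (x' i - y i - τ) + I.card * τ := by
        gcongr
        · exact fun i _ _ => by linarith [e2 i]
        · exact Finset.subset_univ _
    _ = _ := by
        congr 1
        have : ∀ i, max (z i - τ) 0 = max (z i) τ - τ := by
          intro i; rw [← max_sub_sub_right, sub_self]
        simp only [this, Finset.sum_sub_distrib, e3]
        ring

lemma abel_aux (b e : ℕ → ℝ) (N : ℕ) (hb : ∀ i, i + 1 < N → b (i + 1) ≤ b i)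
    (he : ∀ k ≤ N, 0 ≤ ∑ i ∈ Finset.range k, e i) (m : ℕ) (hm : m < N) :
    b m * ∑ i ∈ Finset.range (m + 1), e i ≤ ∑ i ∈ Finset.range (m + 1), b i * e i := by
  induction m with
  | zero => simp
  | succ m ih =>
    have ih := ih (by omega)
    rw [Finset.sum_range_succ _ (m + 1), Finset.sum_range_succ _ (m + 1)]
    have h1 := mul_le_mul_of_nonneg_right (hb m hm) (he (m + 1) (by omega))
    nlinarith

lemma abel {n : ℕ} (b d z : Fin n → ℝ) (hb : Antitone b)
    (h : ∀ k ≤ n, ∑ i with i.val < k, d i ≤ ∑ i with i.val < k, z i)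
    (ht : ∑ i, d i = ∑ i, z i) : ∑ i, b i * d i ≤ ∑ i, b i * z i := by
  rcases Nat.eq_zero_or_pos n with rfl | hn
  · simp
  let B : ℕ → ℝ := fun i => if hi : i < n then b ⟨i, hi⟩ else 0
  let E : ℕ → ℝ := fun i => if hi : i < n then z ⟨i, hi⟩ - d ⟨i, hi⟩ else 0
  have key : ∀ k ≤ n, ∑ i ∈ Finset.range k, E i = ∑ i with i.val < k, (z i - d i) := by
    intro k hk
    symm
    refine Finset.sum_bij (fun i _ => i.val) ?_ ?_ ?_ ?_
    · intro i hi; simpa using hi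
    · intro i _ j _ hij; exact Fin.ext hij
    · intro j hj
      have hj' := Finset.mem_range.1 hj
      exact ⟨⟨j, by omega⟩, by simpa using hj', rfl⟩
    · intro i _; simp [E]
  have h1 := abel_aux B E n (by
      intro i hi
      have : i < n := by omega
      simp only [B, hi, this, dif_pos]
      exact hb (by simp [Fin.le_def])) (by
      intro k hk
      rw [key k hk, Finset.sum_sub_distrib]; linarith [h k hk]) (n - 1) (by omega)
  rw [Nat.sub_add_cancel hn, key n le_rfl] at h1
  have h2 : ∑ i with i.val < n, (z i - d i) = 0 := by
    have : (Finset.univ.filter fun i : Fin n => i.val < n) = Finset.univ := by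
      ext i; simp
    rw [this, Finset.sum_sub_distrib]; linarith
  rw [h2, mul_zero, ← Fin.sum_univ_eq_sum_range (fun i => B i * E i)] at h1
  simp only [B, E, Fin.is_lt, dif_pos, Fin.eta, mul_sub, Finset.sum_sub_distrib] at h1
  linarith

lemma hahn {n : ℕ} {v : (Fin n → ℝ) → ℝ}
    (hv_smul : ∀ (c : ℝ) (x : Fin n → ℝ), v (c • x) = |c| * v x)
    (hv_add : ∀ x y, v (x + y) ≤ v x + v y) (d : Fin n → ℝ) :
    ∃ b : Fin n → ℝ, (∑ i, b i * d i = v d) ∧ ∀ y, ∑ i, b i * y i ≤ v y := by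
  have h0 : v 0 = 0 := by have := hv_smul 0 0; simpa using this
  have hnn : ∀ x, 0 ≤ v x := by
    intro x
    have h1 := hv_add x ((-1 : ℝ) • x)
    rw [hv_smul] at h1
    simp [h0] at h1
    linarith
  by_cases hd : d = 0
  · refine ⟨0, by simp [hd, h0], fun y => by simpa using hnn y⟩
  obtain ⟨g, hg1, hg2⟩ := exists_extension_of_le_sublinear
    (LinearPMap.mkSpanSingleton d (v d) hd) v
    (fun c hc x => by rw [hv_smul, abs_of_pos hc]) hv_add (by
      rintro ⟨x, hx⟩
      obtain ⟨c, rfl⟩ := Submodule.mem_span_singleton.1 hx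
      have h1 : (LinearPMap.mkSpanSingleton d (v d) hd) ⟨c • d, hx⟩ = c • v d :=
        LinearPMap.mkSpanSingleton'_apply d (v d) _ c hx
      rw [h1, hv_smul, smul_eq_mul]
      exact mul_le_mul_of_nonneg_right (le_abs_self c) (hnn d))
  have hrep : ∀ y, ∑ i, g (Pi.single i 1) * y i = g y := by
    intro y
    conv_rhs => rw [← Finset.univ_sum_single y]
    rw [map_sum]
    refine Finset.sum_congr rfl fun i _ => ?_
    have : Pi.single i (y i) = y i • (Pi.single i (1 : ℝ) : Fin n → ℝ) := by
      rw [← Pi.single_smul]; simp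
    rw [this, map_smul, smul_eq_mul, mul_comm]
  refine ⟨fun i => g (Pi.single i 1), ?_, fun y => by rw [hrep]; exact hg2 y⟩
  rw [hrep]
  have h1 := hg1 ⟨d, Submodule.mem_span_singleton_self d⟩
  exact h1.trans (LinearPMap.mkSpanSingleton_apply ℝ ℝ hd _)

lemma top_sum {n : ℕ} {z : Fin n → ℝ} (hz : Antitone z) (k : ℕ) (hk : k ≤ n) (hk0 : 0 < k) :
    ∑ i, max (z i - z ⟨k - 1, by omega⟩) 0 + k * z ⟨k - 1, by omega⟩ = ∑ i with i.val < k, z i := by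
  set τ := z ⟨k - 1, by omega⟩
  have hc : (Finset.univ.filter fun i : Fin n => i.val < k).card = k := by
    rw [Fin.card_filter_val_lt]; omega
  have h1 : ∑ i, max (z i - τ) 0 = ∑ i with i.val < k, (z i - τ) := by
    rw [Finset.sum_filter]
    refine Finset.sum_congr rfl fun i _ => ?_
    split_ifs with h
    · exact max_eq_left (sub_nonneg.2 (hz (by rw [Fin.le_def]; simp; omega)))
    · exact max_eq_right (sub_nonpos.2 (hz (by rw [Fin.le_def]; simp; omega)))
  rw [h1, Finset.sum_sub_distrib, Finset.sum_const, hc]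
  simp

/-- Triangle inequality for the Finsler distance. -/
lemma tri {n : ℕ} {v : (Fin n → ℝ) → ℝ}
    (hv_smul : ∀ (c : ℝ) (x : Fin n → ℝ), v (c • x) = |c| * v x)
    (hv_add : ∀ x y, v (x + y) ≤ v x + v y)
    (hv_perm : ∀ (σ : Equiv.Perm (Fin n)) (x : Fin n → ℝ), v (x ∘ σ) = v x)
    {A U W V : Matrix (Fin n) (Fin n) ℂ} (hA : A.PosDef)
    (hU : IsU U) (hW : IsU W) (hV : IsU V) {x y z : Fin n → ℝ}
    (hx : Antitone x) (hy : Antitone y) (hz : Antitone z)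
    (hA2 : A * A = cj U (fun i => Real.exp (y i)))
    (hAE : A * cj W (fun i => Real.exp (z i)) * A = cj V (fun i => Real.exp (x i))) :
    v x ≤ v y + v z := by
  have h1 : v (x - y) ≤ v z := by
    obtain ⟨b, hb1, hb2⟩ := hahn hv_smul hv_add (x - y)
    set σ := Tuple.sort (fun i => - b i)
    have hσ : Antitone (b ∘ σ) := by
      intro i j hij
      have := Tuple.monotone_sort (fun i => - b i) hij
      simpa using this
    have h2 := abel (b ∘ σ) ((x - y) ∘ σ) z hσ (by
      intro k hk
      rcases Nat.eq_zero_or_pos k with rfl | hk0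
      · simp
      have h3 := lidskii hA hU hW hV hx hy hA2 hAE (z ⟨k - 1, by omega⟩)
        ((Finset.univ.filter fun i : Fin n => i.val < k).map σ.toEmbedding)
      rw [Finset.card_map, Fin.card_filter_val_lt, min_eq_right hk, top_sum hz k hk hk0,
        Finset.sum_map] at h3
      exact h3) (by
      have h4 := det_sum hU hW hV hA2 hAE
      have h5 : ∑ i, ((x - y) ∘ σ) i = ∑ i, (x - y) i := Equiv.sum_comp σ (x - y)
      rw [h5]
      simp only [Pi.sub_apply, Finset.sum_sub_distrib]
      linarith)
    have h6 : ∑ i, (b ∘ σ) i * ((x - y) ∘ σ) i = ∑ i, b i * (x - y) i :=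
      Equiv.sum_comp σ (fun i => b i * (x - y) i)
    have h7 : ∑ i, (b ∘ σ) i * z i = ∑ i, b i * (z ∘ σ.symm) i := by
      rw [← Equiv.sum_comp σ (fun i => b i * (z ∘ σ.symm) i)]
      simp
    rw [h6, h7, hb1] at h2
    calc _ ≤ _ := h2
      _ ≤ _ := hb2 _
      _ = _ := hv_perm _ _
  calc v x = v (y + (x - y)) := by congr 1; abel
    _ ≤ _ := (hv_add _ _).trans (by linarith)

lemma dsto {n : ℕ} {V : Matrix (Fin n) (Fin n) ℂ} (hV : IsU V) :
    (Matrix.of fun i j => ‖V i j‖ ^ 2 : Matrix (Fin n) (Fin n) ℝ) ∈ doublyStochastic ℝ (Fin n) := by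
  rw [mem_doublyStochastic_iff_sum]
  refine ⟨fun i j => by simp, fun i => ?_, fun j => ?_⟩
  · have := congrFun (congrFun hV.2 i) i
    simp only [mul_apply, conjTranspose_apply, RCLike.star_def, Complex.mul_conj', one_apply_eq] at this
    simp only [of_apply]
    exact_mod_cast this
  · have := congrFun (congrFun hV.1 j) j
    simp only [mul_apply, conjTranspose_apply, RCLike.star_def, Complex.conj_mul', one_apply_eq] at this
    simp only [of_apply]
    exact_mod_cast this

lemma v_sum_le {n : ℕ} {v : (Fin n → ℝ) → ℝ}
    (hv_smul : ∀ (c : ℝ) (x : Fin n → ℝ), v (c • x) = |c| * v x)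
    (hv_add : ∀ x y, v (x + y) ≤ v x + v y) {ι : Type*} (s : Finset ι) (c : ι → ℝ)
    (x : ι → Fin n → ℝ) : v (∑ i ∈ s, c i • x i) ≤ ∑ i ∈ s, |c i| * v (x i) := by
  classical
  have h0 : v 0 = 0 := by have := hv_smul 0 0; simpa using this
  induction s using Finset.induction_on with
  | empty => simp [h0]
  | insert a s ha ih =>
    rw [Finset.sum_insert ha, Finset.sum_insert ha]
    refine (hv_add _ _).trans ?_
    rw [hv_smul]; linarith

lemma schur {n : ℕ} {v : (Fin n → ℝ) → ℝ}
    (hv_smul : ∀ (c : ℝ) (x : Fin n → ℝ), v (c • x) = |c| * v x)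
    (hv_add : ∀ x y, v (x + y) ≤ v x + v y)
    (hv_perm : ∀ (σ : Equiv.Perm (Fin n)) (x : Fin n → ℝ), v (x ∘ σ) = v x)
    {V : Matrix (Fin n) (Fin n) ℂ} (hV : IsU V) (s : Fin n → ℝ) :
    v (fun i => ∑ j, ‖V i j‖ ^ 2 * s j) ≤ v s := by
  obtain ⟨w, hw0, hw1, hw⟩ := exists_eq_sum_perm_of_mem_doublyStochastic (dsto hV)
  have h1 : (fun i => ∑ j, ‖V i j‖ ^ 2 * s j) = ∑ σ, w σ • (s ∘ σ) := by
    have h2 : (fun i => ∑ j, ‖V i j‖ ^ 2 * s j) =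
      (Matrix.of fun i j => ‖V i j‖ ^ 2 : Matrix (Fin n) (Fin n) ℝ) *ᵥ s := by
      funext i; simp [mulVec, dotProduct]
    rw [h2, ← hw, Matrix.sum_mulVec]
    refine Finset.sum_congr rfl fun σ _ => ?_
    rw [Matrix.smul_mulVec]
    congr 1
    funext i
    simp [Equiv.Perm.permMatrix, PEquiv.toMatrix_toPEquiv_mulVec]
  rw [h1]
  refine (v_sum_le hv_smul hv_add _ _ _).trans ?_
  simp only [hv_perm, abs_of_nonneg (hw0 _)]
  rw [← Finset.sum_mul, hw1, one_mul]

lemma trace_cj {n : ℕ} (U W : Matrix (Fin n) (Fin n) ℂ) (b s : Fin n → ℝ) :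
    (trace (cj U b * cj W s)).re = ∑ i, b i * ∑ j, ‖(Uᴴ * W) i j‖ ^ 2 * s j := by
  have h1 : trace (cj U b * cj W s) = trace (Dg b * ((Uᴴ * W) * Dg s * (Uᴴ * W)ᴴ)) := by
    unfold cj
    rw [conjTranspose_mul, conjTranspose_conjTranspose]
    rw [show U * Dg b * Uᴴ * (W * Dg s * Wᴴ) = U * (Dg b * Uᴴ * (W * Dg s * Wᴴ)) by
      simp only [Matrix.mul_assoc], trace_mul_comm]
    simp only [Matrix.mul_assoc]
  rw [h1, trace, Complex.re_sum]
  refine Finset.sum_congr rfl fun i _ => ?_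
  rw [diag_apply, diagonal_mul, Complex.re_ofReal_mul]
  congr 1
  rw [mul_apply, Complex.re_sum]
  refine Finset.sum_congr rfl fun j _ => ?_
  rw [mul_diagonal, conjTranspose_apply, RCLike.star_def]
  rw [show (Uᴴ * W) i j * (s j : ℂ) * (starRingEnd ℂ) ((Uᴴ * W) i j) =
    ((Uᴴ * W) i j * (starRingEnd ℂ) ((Uᴴ * W) i j)) * (s j : ℂ) by ring, Complex.mul_conj',
    ← Complex.ofReal_pow, ← Complex.ofReal_mul, Complex.ofReal_re]

lemma IsU.mul {n : ℕ} {U W : Matrix (Fin n) (Fin n) ℂ} (hU : IsU U) (hW : IsU W) : IsU (U * W) := by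
  have h : (U * W)ᴴ * (U * W) = 1 := by
    rw [conjTranspose_mul, Matrix.mul_assoc, ← Matrix.mul_assoc Uᴴ, hU.1, Matrix.one_mul, hW.1]
  exact ⟨h, mul_eq_one_comm.1 h⟩

lemma IsU.star {n : ℕ} {U : Matrix (Fin n) (Fin n) ℂ} (hU : IsU U) : IsU Uᴴ := by
  unfold IsU
  rw [conjTranspose_conjTranspose]
  exact ⟨hU.2, hU.1⟩

lemma trace_form {n : ℕ} {v : (Fin n → ℝ) → ℝ}
    (hv_smul : ∀ (c : ℝ) (x : Fin n → ℝ), v (c • x) = |c| * v x)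
    (hv_add : ∀ x y, v (x + y) ≤ v x + v y)
    (hv_perm : ∀ (σ : Equiv.Perm (Fin n)) (x : Fin n → ℝ), v (x ∘ σ) = v x)
    {U W : Matrix (Fin n) (Fin n) ℂ} (hU : IsU U) (hW : IsU W) (b s : Fin n → ℝ) :
    ∃ y : Fin n → ℝ, (trace (cj U b * cj W s)).re = ∑ i, b i * y i ∧ v y ≤ v s :=
  ⟨_, trace_cj U W b s, schur hv_smul hv_add hv_perm (hU.star.mul hW) s⟩

lemma trace_same {n : ℕ} {U : Matrix (Fin n) (Fin n) ℂ} (hU : IsU U) (b s : Fin n → ℝ) :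
    (trace (cj U b * cj U s)).re = ∑ i, b i * s i := by
  rw [trace_cj, hU.1]
  refine Finset.sum_congr rfl fun i _ => ?_
  congr 1
  rw [Finset.sum_eq_single i]
  · simp
  · intro j _ hj
    simp [Matrix.one_apply_ne (Ne.symm hj)]
  · simp

section norms
variable {n : ℕ} {v vs : (Fin n → ℝ) → ℝ}

lemma v_nonneg
    (hv_smul : ∀ (c : ℝ) (x : Fin n → ℝ), v (c • x) = |c| * v x)
    (hv_add : ∀ x y, v (x + y) ≤ v x + v y)
    (x : Fin n → ℝ) : 0 ≤ v x := by
  have h0 : v 0 = 0 := by have := hv_smul 0 0; simpa using this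
  have h1 := hv_add x ((-1 : ℝ) • x)
  rw [hv_smul] at h1
  simp [h0] at h1
  linarith

lemma holder
    (hv_eq0 : ∀ x, v x = 0 ↔ x = 0)
    (hv_smul : ∀ (c : ℝ) (x : Fin n → ℝ), v (c • x) = |c| * v x)
    (hv_add : ∀ x y, v (x + y) ≤ v x + v y)
    (hvs : ∀ x, IsGreatest {r : ℝ | ∃ y : Fin n → ℝ, v y ≤ 1 ∧ r = ∑ i, x i * y i} (vs x))
    (x y : Fin n → ℝ) : ∑ i, x i * y i ≤ vs x * v y := by
  rcases (v_nonneg hv_smul hv_add y).eq_or_lt with h | h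
  · have : y = 0 := (hv_eq0 y).1 h.symm
    subst this
    simp [← h]
  · have h1 := (hvs x).2 ⟨(v y)⁻¹ • y, by
      rw [hv_smul, abs_of_pos (inv_pos.2 h), inv_mul_cancel₀ h.ne'], rfl⟩
    have h2 : ∑ i, x i * ((v y)⁻¹ • y) i = (v y)⁻¹ * ∑ i, x i * y i := by
      rw [Finset.mul_sum]
      refine Finset.sum_congr rfl fun i _ => ?_
      simp only [Pi.smul_apply, smul_eq_mul]; ring
    rw [h2, inv_mul_le_iff₀ h] at h1
    linarith

lemma vs_nonneg
    (hv_smul : ∀ (c : ℝ) (x : Fin n → ℝ), v (c • x) = |c| * v x)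
    (hvs : ∀ x, IsGreatest {r : ℝ | ∃ y : Fin n → ℝ, v y ≤ 1 ∧ r = ∑ i, x i * y i} (vs x))
    (x : Fin n → ℝ) : 0 ≤ vs x :=
  (hvs x).2 ⟨0, by have := hv_smul 0 0; simp at this; rw [this]; norm_num, by simp⟩

lemma vs_perm
    (hv_perm : ∀ (σ : Equiv.Perm (Fin n)) (x : Fin n → ℝ), v (x ∘ σ) = v x)
    (hvs : ∀ x, IsGreatest {r : ℝ | ∃ y : Fin n → ℝ, v y ≤ 1 ∧ r = ∑ i, x i * y i} (vs x))
    (σ : Equiv.Perm (Fin n)) (x : Fin n → ℝ) : vs (x ∘ σ) = vs x := by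
  have key : ∀ (σ : Equiv.Perm (Fin n)) (x : Fin n → ℝ), vs (x ∘ σ) ≤ vs x := by
    intro σ x
    obtain ⟨y, hy, he⟩ := (hvs (x ∘ σ)).1
    rw [he]
    refine (hvs x).2 ⟨y ∘ σ.symm, by rwa [hv_perm], ?_⟩
    rw [← Equiv.sum_comp σ (fun i => x i * (y ∘ σ.symm) i)]
    simp
  refine le_antisymm (key _ _) ?_
  have := key σ.symm (x ∘ σ)
  simpa [Function.comp_assoc] using this

lemma v_le_sqrt
    (hv_smul : ∀ (c : ℝ) (x : Fin n → ℝ), v (c • x) = |c| * v x)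
    (hv_add : ∀ x y, v (x + y) ≤ v x + v y)
    : ∃ c : ℝ, 0 ≤ c ∧ ∀ z : Fin n → ℝ, v z ≤ c * Real.sqrt (∑ i, z i ^ 2) := by
  refine ⟨∑ i, v (Pi.single i 1), Finset.sum_nonneg fun i _ => v_nonneg hv_smul hv_add _, fun z => ?_⟩
  have h1 : z = ∑ i, z i • (Pi.single i (1 : ℝ) : Fin n → ℝ) := by
    conv_lhs => rw [← Finset.univ_sum_single z]
    refine Finset.sum_congr rfl fun i _ => ?_
    rw [← Pi.single_smul]; simp
  conv_lhs => rw [h1]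
  refine (v_sum_le hv_smul hv_add _ _ _).trans ?_
  rw [Finset.sum_mul]
  refine Finset.sum_le_sum fun i _ => ?_
  rw [mul_comm]
  refine mul_le_mul_of_nonneg_left ?_ (v_nonneg hv_smul hv_add _)
  rw [← Real.sqrt_sq_eq_abs]
  exact Real.sqrt_le_sqrt (Finset.single_le_sum (f := fun i => z i ^ 2)
    (fun _ _ => sq_nonneg _) (Finset.mem_univ i))

lemma abs_le_v
    (hv_eq0 : ∀ x, v x = 0 ↔ x = 0)
    (hv_smul : ∀ (c : ℝ) (x : Fin n → ℝ), v (c • x) = |c| * v x)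
    (hv_add : ∀ x y, v (x + y) ≤ v x + v y)
    (hvs : ∀ x, IsGreatest {r : ℝ | ∃ y : Fin n → ℝ, v y ≤ 1 ∧ r = ∑ i, x i * y i} (vs x))
    : ∃ C : ℝ, 0 ≤ C ∧ ∀ (z : Fin n → ℝ), ∑ i, |z i| ≤ C * v z := by
  refine ⟨∑ i, (vs (Pi.single i 1) + vs (Pi.single i (-1))),
    Finset.sum_nonneg fun i _ => add_nonneg (vs_nonneg hv_smul hvs _) (vs_nonneg hv_smul hvs _),
    fun z => ?_⟩
  rw [Finset.sum_mul]
  refine Finset.sum_le_sum fun i _ => ?_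
  have h1 := holder hv_eq0 hv_smul hv_add hvs (Pi.single i 1) z
  have h2 := holder hv_eq0 hv_smul hv_add hvs (Pi.single i (-1)) z
  simp [Pi.single_apply] at h1 h2
  have a1 := mul_nonneg (vs_nonneg hv_smul hvs (Pi.single i 1)) (v_nonneg hv_smul hv_add z)
  have a2 := mul_nonneg (vs_nonneg hv_smul hvs (Pi.single i (-1))) (v_nonneg hv_smul hv_add z)
  rw [abs_le]
  constructor <;> nlinarith

lemma support
    (hv_smul : ∀ (c : ℝ) (x : Fin n → ℝ), v (c • x) = |c| * v x)
    (hv_add : ∀ x y, v (x + y) ≤ v x + v y)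
    (hv_perm : ∀ (σ : Equiv.Perm (Fin n)) (x : Fin n → ℝ), v (x ∘ σ) = v x)
    {H : Matrix (Fin n) (Fin n) ℂ} (hH : H.IsHermitian) :
    ∃ B : Matrix (Fin n) (Fin n) ℂ, (trace (B * H)).re = vnorm v H ∧
      ∀ K : Matrix (Fin n) (Fin n) ℂ, K.IsHermitian → (trace (B * K)).re ≤ vnorm v K := by
  obtain ⟨U, h, hU, ha, rfl⟩ := spec hH
  obtain ⟨b, hb1, hb2⟩ := hahn hv_smul hv_add h
  refine ⟨cj U b, ?_, ?_⟩
  · rw [trace_same hU, hb1, vnorm_cj hU _ _ hv_perm]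
  · intro K hK
    obtain ⟨W, k, hW, -, rfl⟩ := spec hK
    obtain ⟨y, hy1, hy2⟩ := trace_form hv_smul hv_add hv_perm hU hW b k
    rw [hy1, vnorm_cj hW _ _ hv_perm]
    exact (hb2 y).trans hy2

lemma trace_le
    (hv_eq0 : ∀ x, v x = 0 ↔ x = 0)
    (hv_smul : ∀ (c : ℝ) (x : Fin n → ℝ), v (c • x) = |c| * v x)
    (hv_add : ∀ x y, v (x + y) ≤ v x + v y)
    (hv_perm : ∀ (σ : Equiv.Perm (Fin n)) (x : Fin n → ℝ), v (x ∘ σ) = v x)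
    (hvs : ∀ x, IsGreatest {r : ℝ | ∃ y : Fin n → ℝ, v y ≤ 1 ∧ r = ∑ i, x i * y i} (vs x))
    {G S : Matrix (Fin n) (Fin n) ℂ} (hG : G.IsHermitian) (hS : S.IsHermitian) :
    (trace (G * S)).re ≤ vnorm vs G * vnorm v S := by
  obtain ⟨U, g, hU, -, rfl⟩ := spec hG
  obtain ⟨W, s, hW, -, rfl⟩ := spec hS
  obtain ⟨y, hy1, hy2⟩ := trace_form hv_smul hv_add hv_perm hU hW g s
  rw [hy1, vnorm_cj hW _ _ hv_perm, vnorm_cj hU _ _ (vs_perm hv_perm hvs)]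
  exact (holder hv_eq0 hv_smul hv_add hvs g y).trans
    (mul_le_mul_of_nonneg_left hy2 (vs_nonneg hv_smul hvs g))

lemma vnorm_smul
    (hv_smul : ∀ (c : ℝ) (x : Fin n → ℝ), v (c • x) = |c| * v x)
    (hv_perm : ∀ (σ : Equiv.Perm (Fin n)) (x : Fin n → ℝ), v (x ∘ σ) = v x)
    {H : Matrix (Fin n) (Fin n) ℂ} (hH : H.IsHermitian) (t : ℝ) :
    vnorm v (t • H) = |t| * vnorm v H := by
  obtain ⟨U, h, hU, ha, rfl⟩ := spec hH
  rw [smul_cj, vnorm_cj hU _ _ hv_perm, vnorm_cj hU _ _ hv_perm, hv_smul]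

lemma vs_attain
    (hv_perm : ∀ (σ : Equiv.Perm (Fin n)) (x : Fin n → ℝ), v (x ∘ σ) = v x)
    (hvs : ∀ x, IsGreatest {r : ℝ | ∃ y : Fin n → ℝ, v y ≤ 1 ∧ r = ∑ i, x i * y i} (vs x))
    {G : Matrix (Fin n) (Fin n) ℂ} (hG : G.IsHermitian) :
    ∃ S : Matrix (Fin n) (Fin n) ℂ, S.IsHermitian ∧ vnorm v S ≤ 1 ∧
      (trace (G * S)).re = vnorm vs G := by
  obtain ⟨U, g, hU, -, rfl⟩ := spec hG
  obtain ⟨y, hy, he⟩ := (hvs g).1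
  refine ⟨cj U y, cj_herm _ _, by rwa [vnorm_cj hU _ _ hv_perm], ?_⟩
  rw [trace_same hU, vnorm_cj hU _ _ (vs_perm hv_perm hvs), he]

lemma ball_compact
    (hv_eq0 : ∀ x, v x = 0 ↔ x = 0)
    (hv_smul : ∀ (c : ℝ) (x : Fin n → ℝ), v (c • x) = |c| * v x)
    (hv_add : ∀ x y, v (x + y) ≤ v x + v y)
    (hv_perm : ∀ (σ : Equiv.Perm (Fin n)) (x : Fin n → ℝ), v (x ∘ σ) = v x)
    (hvs : ∀ x, IsGreatest {r : ℝ | ∃ y : Fin n → ℝ, v y ≤ 1 ∧ r = ∑ i, x i * y i} (vs x))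
    (R : ℝ) :
    IsCompact {H : Matrix (Fin n) (Fin n) ℂ | H.IsHermitian ∧ vnorm v H ≤ R} := by
  obtain ⟨C, hC0, hC⟩ := abs_le_v hv_eq0 hv_smul hv_add hvs
  have hcomp : IsCompact (Set.pi Set.univ (fun _ : Fin n =>
      Set.pi Set.univ (fun _ : Fin n => Metric.closedBall (0 : ℂ) (C * R)))) :=
    isCompact_univ_pi fun _ => isCompact_univ_pi fun _ => isCompact_closedBall _ _
  refine IsCompact.of_isClosed_subset (X := Matrix (Fin n) (Fin n) ℂ) hcomp ?_ ?_
  · have : {H : Matrix (Fin n) (Fin n) ℂ | H.IsHermitian ∧ vnorm v H ≤ R} =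
      {H | Hᴴ = H} ∩ ⋂ B ∈ {B : Matrix (Fin n) (Fin n) ℂ |
        ∀ K : Matrix (Fin n) (Fin n) ℂ, K.IsHermitian → (trace (B * K)).re ≤ vnorm v K},
          {H | (trace (B * H)).re ≤ R} := by
      ext H
      simp only [Set.mem_ofPred_eq, Set.mem_inter_iff, Set.mem_iInter]
      constructor
      · rintro ⟨h1, h2⟩
        exact ⟨h1, fun B hB => (hB H h1).trans h2⟩
      · rintro ⟨h1, h2⟩
        obtain ⟨B, hB1, hB2⟩ := support hv_smul hv_add hv_perm (H := H) h1
        exact ⟨h1, hB1 ▸ h2 B hB2⟩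
    rw [this]
    refine IsClosed.inter (isClosed_eq (by fun_prop) continuous_id) ?_
    refine isClosed_biInter fun B _ => isClosed_le ?_ continuous_const
    exact Complex.continuous_re.comp (Continuous.matrix_trace (by fun_prop))
  · rintro H ⟨h1, h2⟩ i - j -
    obtain ⟨U, h, hU, ha, rfl⟩ := spec h1
    rw [vnorm_cj hU _ _ hv_perm] at h2
    rw [Metric.mem_closedBall, dist_zero_right]
    have hent : ∀ i j, ‖U i j‖ ≤ 1 := by
      intro i j
      exact entry_norm_bound_of_unitary (U := U) (Unitary.mem_iff.2 hU) i j
    unfold cj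
    rw [mul_apply]
    calc _ ≤ ∑ k, ‖(U * Dg h) i k * Uᴴ k j‖ := norm_sum_le _ _
      _ ≤ ∑ k, |h k| := by
        refine Finset.sum_le_sum fun k _ => ?_
        rw [mul_diagonal, conjTranspose_apply, norm_mul, norm_mul, norm_star, Complex.norm_real,
          Real.norm_eq_abs]
        have := hent i k
        have := hent j k
        calc ‖U i k‖ * |h k| * ‖U j k‖ ≤ 1 * |h k| * 1 := by gcongr
          _ = _ := by ring
      _ ≤ C * v h := hC h
      _ ≤ C * R := by gcongr

end norms

section func
variable {n : ℕ} {f : Matrix (Fin n) (Fin n) ℂ → ℝ}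

lemma conv_gen
    (hconv : ∀ X : Matrix (Fin n) (Fin n) ℂ, X.PosDef →
      ∀ S : Matrix (Fin n) (Fin n) ℂ, S.IsHermitian →
        ConvexOn ℝ Set.univ (fun t : ℝ => f (matSqrt X * NormedSpace.exp (t • S) * matSqrt X)))
    {C : Matrix (Fin n) (Fin n) ℂ} (hC : IsUnit C) {S : Matrix (Fin n) (Fin n) ℂ}
    (hS : S.IsHermitian) :
    ConvexOn ℝ Set.univ (fun t : ℝ => f (C * NormedSpace.exp (t • S) * Cᴴ)) := by
  have hX : (C * Cᴴ).PosDef := by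
    have := (IsUnit.posDef_star_right_conjugate_iff hC).2
      (PosDef.one : (1 : Matrix (Fin n) (Fin n) ℂ).PosDef)
    simpa [star_eq_conjTranspose] using this
  obtain ⟨hP, hPP⟩ := matSqrt_spec hX
  set P := matSqrt (C * Cᴴ) with hPdef
  have hPh : Pᴴ = P := hP.1
  have hPd : IsUnit P.det := (Matrix.isUnit_iff_isUnit_det P).1 hP.isUnit
  set V := P⁻¹ * C with hVdef
  have hCV : C = P * V := by
    rw [hVdef, ← Matrix.mul_assoc, Matrix.mul_nonsing_inv _ hPd, Matrix.one_mul]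
  have hV2 : V * Vᴴ = 1 := by
    rw [hVdef, conjTranspose_mul, conjTranspose_nonsing_inv, hPh]
    calc P⁻¹ * C * (Cᴴ * P⁻¹) = P⁻¹ * (C * Cᴴ) * P⁻¹ := by simp only [Matrix.mul_assoc]
      _ = (P⁻¹ * P) * (P * P⁻¹) := by rw [← hPP]; simp only [Matrix.mul_assoc]
      _ = 1 := by rw [Matrix.mul_nonsing_inv _ hPd, Matrix.nonsing_inv_mul _ hPd, Matrix.one_mul]
  have hV1 : Vᴴ * V = 1 := mul_eq_one_comm.1 hV2
  have hinv : V⁻¹ = Vᴴ := inv_eq_left_inv hV1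
  have hu : IsUnit V := ⟨⟨V, Vᴴ, hV2, hV1⟩, rfl⟩
  have hS' : (V * S * Vᴴ).IsHermitian :=
    isHermitian_mul_mul_conjTranspose V hS
  have key := hconv _ hX _ hS'
  have he : (fun t : ℝ => f (C * NormedSpace.exp (t • S) * Cᴴ)) =
      fun t : ℝ => f (P * NormedSpace.exp (t • (V * S * Vᴴ)) * P) := by
    funext t
    congr 1
    have : t • (V * S * Vᴴ) = V * (t • S) * V⁻¹ := by
      rw [hinv, Matrix.mul_smul, Matrix.smul_mul]
    rw [this, Matrix.exp_conj _ _ hu, hinv]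
    conv_lhs => rw [hCV]
    rw [conjTranspose_mul, hPh]
    simp only [Matrix.mul_assoc]
  rw [he]
  exact key

lemma conv_one
    (hconv : ∀ X : Matrix (Fin n) (Fin n) ℂ, X.PosDef →
      ∀ S : Matrix (Fin n) (Fin n) ℂ, S.IsHermitian →
        ConvexOn ℝ Set.univ (fun t : ℝ => f (matSqrt X * NormedSpace.exp (t • S) * matSqrt X)))
    {S : Matrix (Fin n) (Fin n) ℂ} (hS : S.IsHermitian) :
    ConvexOn ℝ Set.univ (fun t : ℝ => f (NormedSpace.exp (t • S))) := by
  have := conv_gen hconv isUnit_one hS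
  simpa using this

lemma isU_one : IsU (1 : Matrix (Fin n) (Fin n) ℂ) := by simp [IsU]

lemma flat_convex
    (hconv : ∀ X : Matrix (Fin n) (Fin n) ℂ, X.PosDef →
      ∀ S : Matrix (Fin n) (Fin n) ℂ, S.IsHermitian →
        ConvexOn ℝ Set.univ (fun t : ℝ => f (matSqrt X * NormedSpace.exp (t • S) * matSqrt X)))
    {A U : Matrix (Fin n) (Fin n) ℂ} (hA : A.PosDef) (hU : IsU U) :
    ConvexOn ℝ Set.univ (fun x : Fin n → ℝ => f (A * cj U (fun i => Real.exp (x i)) * A)) := by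
  refine ⟨convex_univ, ?_⟩
  intro x _ y _ a b ha hb hab
  have hAh : Aᴴ = A := hA.1
  have hC : IsUnit (A * U * Dg (fun i => Real.exp (x i / 2))) := by
    refine (hA.isUnit.mul ⟨⟨U, Uᴴ, hU.2, hU.1⟩, rfl⟩).mul ?_
    have := (cj_posDef (isU_one (n := n)) (h := fun i => Real.exp (x i / 2))
      fun i => Real.exp_pos _).isUnit
    simpa [cj] using this
  have key := (conv_gen hconv hC (cj_herm 1 (y - x))).2 (Set.mem_univ (0 : ℝ))
    (Set.mem_univ (1 : ℝ)) ha hb hab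
  have he : ∀ t : ℝ, A * U * Dg (fun i => Real.exp (x i / 2)) *
      NormedSpace.exp (t • cj 1 (y - x)) * (A * U * Dg (fun i => Real.exp (x i / 2)))ᴴ =
      A * cj U (fun i => Real.exp (x i + t * (y i - x i))) * A := by
    intro t
    rw [smul_cj, exp_cj isU_one]
    have h1 : (Dg (fun i => Real.exp (x i / 2)))ᴴ = Dg (fun i => Real.exp (x i / 2)) := by
      have := (cj_herm (1 : Matrix (Fin n) (Fin n) ℂ) (fun i => Real.exp (x i / 2))).eq
      simpa [cj] using this
    rw [conjTranspose_mul, conjTranspose_mul, hAh, h1]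
    have h2 : Dg (fun i => Real.exp (x i + t * (y i - x i))) = Dg (fun i => Real.exp (x i / 2)) *
        Dg (fun i => Real.exp ((t • (y - x)) i)) * Dg (fun i => Real.exp (x i / 2)) := by
      rw [Dg_mul, Dg_mul]
      congr 1; funext i
      rw [← Real.exp_add, ← Real.exp_add]
      simp only [Pi.smul_apply, Pi.sub_apply, smul_eq_mul]
      congr 1; ring
    unfold cj
    rw [h2]
    simp only [Matrix.mul_assoc, conjTranspose_one, Matrix.one_mul, Matrix.mul_one]
  simp only [he] at key
  have e1 : ∀ i, x i + (a • (0 : ℝ) + b • (1 : ℝ)) * (y i - x i) = (a • x + b • y) i := by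
    intro i
    have : a = 1 - b := by linarith
    simp [this]; ring
  simp only [e1, zero_mul, add_zero, one_mul, add_sub_cancel] at key
  exact key

variable {Gf : Matrix (Fin n) (Fin n) ℂ → Matrix (Fin n) (Fin n) ℂ}

lemma deriv_geo
    (hconv : ∀ X : Matrix (Fin n) (Fin n) ℂ, X.PosDef →
      ∀ S : Matrix (Fin n) (Fin n) ℂ, S.IsHermitian →
        ConvexOn ℝ Set.univ (fun t : ℝ => f (matSqrt X * NormedSpace.exp (t • S) * matSqrt X)))
    (hGf : ∀ X : Matrix (Fin n) (Fin n) ℂ, X.PosDef →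
      ∀ H : Matrix (Fin n) (Fin n) ℂ, H.IsHermitian →
        HasDerivAt (fun t : ℝ => f (X + t • H)) ((Matrix.trace (Gf X * H)).re) 0)
    {X : Matrix (Fin n) (Fin n) ℂ} (hX : X.PosDef) {S : Matrix (Fin n) (Fin n) ℂ}
    (hS : S.IsHermitian) :
    HasDerivAt (fun t : ℝ => f (matSqrt X * NormedSpace.exp (t • S) * matSqrt X))
      ((trace (matSqrt X * Gf X * matSqrt X * S)).re) 0 := by
  obtain ⟨hA, hAA⟩ := matSqrt_spec hX
  set A := matSqrt X
  have hAh : Aᴴ = A := hA.1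
  obtain ⟨U, z, hU, -, rfl⟩ := spec hS
  set h : (Fin n → ℝ) → ℝ := fun x => f (A * cj U (fun i => Real.exp (x i)) * A) with hh
  have hc : ConvexOn ℝ Set.univ h := flat_convex hconv hA hU
  obtain ⟨K, T, hT, hL⟩ := hc.locallyLipschitzOn isOpen_univ (Set.mem_univ (0 : Fin n → ℝ))
  rw [nhdsWithin_univ] at hT
  have hd := hGf X hX (A * cj U z * A) (by
    unfold Matrix.IsHermitian
    rw [conjTranspose_mul, conjTranspose_mul, hAh, (cj_herm U z).eq, Matrix.mul_assoc])
  have htr : trace (A * Gf X * A * cj U z) = trace (Gf X * (A * cj U z * A)) := by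
    rw [show A * Gf X * A * cj U z = A * (Gf X * A * cj U z) by simp only [Matrix.mul_assoc],
      trace_mul_comm]
    simp only [Matrix.mul_assoc]
  rw [htr]
  -- the two curves in the flat
  have hq1 : HasDerivAt (fun s : ℝ => s • z) z 0 := by
    simpa using (hasDerivAt_id (0 : ℝ)).smul_const z
  have hq2 : HasDerivAt (fun s : ℝ => (fun i => Real.log (1 + s * z i) : Fin n → ℝ)) z 0 := by
    rw [hasDerivAt_pi]
    intro i
    have h1 : HasDerivAt (fun s : ℝ => 1 + s * z i) (z i) 0 := by
      simpa using ((hasDerivAt_id (0 : ℝ)).mul_const (z i)).const_add 1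
    simpa using h1.log (by simp)
  have hφ : ∀ s : ℝ, f (A * NormedSpace.exp (s • cj U z) * A) = h (s • z) := by
    intro s
    rw [smul_cj, exp_cj hU]
  have hpos : ∀ᶠ s : ℝ in 𝓝 0, ∀ i, 0 < 1 + s * z i := by
    rw [Filter.eventually_all]
    intro i
    have : ContinuousAt (fun s : ℝ => 1 + s * z i) 0 := by fun_prop
    exact this.eventually (lt_mem_nhds (by simp))
  have hψ : ∀ᶠ s : ℝ in 𝓝 0, f (X + s • (A * cj U z * A)) =
      h (fun i => Real.log (1 + s * z i)) := by
    filter_upwards [hpos] with s hs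
    simp only [hh]
    congr 1
    have h1 : (fun i => Real.exp (Real.log (1 + s * z i))) =
        fun i => 1 - (((-s) • z : Fin n → ℝ) i) := by
      funext i; rw [Real.exp_log (hs i)]; simp
    rw [h1, ← cj_sub, cj_one hU, ← smul_cj, Matrix.mul_sub, Matrix.sub_mul, Matrix.mul_one, hAA]
    simp
  have hψd : HasDerivAt (fun s : ℝ => h (fun i => Real.log (1 + s * z i)))
      (trace (Gf X * (A * cj U z * A))).re 0 :=
    hd.congr_of_eventuallyEq (hψ.mono fun s hs => hs.symm)
  simp only [hφ]
  have hdiff : HasDerivAt (fun s : ℝ => h (s • z) - h (fun i => Real.log (1 + s * z i))) 0 0 := by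
    have hq := hq1.sub hq2
    rw [sub_self, hasDerivAt_iff_isLittleO] at hq
    rw [hasDerivAt_iff_isLittleO]
    refine Asymptotics.IsBigO.trans_isLittleO ?_ hq
    refine Asymptotics.IsBigO.of_bound K ?_
    have t1 : ∀ᶠ s : ℝ in 𝓝 0, s • z ∈ T := by
      have := hq1.continuousAt
      refine this.eventually ?_
      simpa using hT
    have t2 : ∀ᶠ s : ℝ in 𝓝 0, (fun i => Real.log (1 + s * z i)) ∈ T := by
      have := hq2.continuousAt
      refine this.eventually ?_
      have h0 : (fun i => Real.log (1 + (0 : ℝ) * z i)) = 0 := by funext i; simp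
      change T ∈ 𝓝 (fun i => Real.log (1 + (0 : ℝ) * z i))
      rw [h0]
      exact hT
    filter_upwards [t1, t2] with s h1 h2
    have h3 := hL.dist_le_mul _ h1 _ h2
    rw [dist_eq_norm, dist_eq_norm] at h3
    have h0 : (fun i => Real.log (1 + (0 : ℝ) * z i)) = 0 := by funext i; simp
    simpa [h0, show (fun _ : Fin n => (0:ℝ)) = 0 from rfl] using h3
  have := hdiff.add hψd
  simp only [zero_add] at this
  refine this.congr_of_eventuallyEq (Eventually.of_forall fun s => ?_)
  simp

lemma subgrad
    (hconv : ∀ X : Matrix (Fin n) (Fin n) ℂ, X.PosDef →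
      ∀ S : Matrix (Fin n) (Fin n) ℂ, S.IsHermitian →
        ConvexOn ℝ Set.univ (fun t : ℝ => f (matSqrt X * NormedSpace.exp (t • S) * matSqrt X)))
    (hGf : ∀ X : Matrix (Fin n) (Fin n) ℂ, X.PosDef →
      ∀ H : Matrix (Fin n) (Fin n) ℂ, H.IsHermitian →
        HasDerivAt (fun t : ℝ => f (X + t • H)) ((Matrix.trace (Gf X * H)).re) 0)
    {X : Matrix (Fin n) (Fin n) ℂ} (hX : X.PosDef) {S : Matrix (Fin n) (Fin n) ℂ}
    (hS : S.IsHermitian) :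
    f X + (trace (matSqrt X * Gf X * matSqrt X * S)).re ≤
      f (matSqrt X * NormedSpace.exp S * matSqrt X) := by
  have h1 := (hconv X hX S hS).le_slope_of_hasDerivAt (Set.mem_univ 0) (Set.mem_univ 1)
    zero_lt_one (deriv_geo hconv hGf hX hS)
  rw [slope_def_field] at h1
  simp only [one_smul, zero_smul, NormedSpace.exp_zero, Matrix.mul_one, (matSqrt_spec hX).2] at h1
  simp at h1
  linarith

end func

section fin
variable {n : ℕ}

lemma exp_cont : Continuous (fun K : Matrix (Fin n) (Fin n) ℂ => NormedSpace.exp K) := by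
  let _ : NormedRing (Matrix (Fin n) (Fin n) ℂ) := Matrix.linftyOpNormedRing
  let _ : NormedAlgebra ℝ (Matrix (Fin n) (Fin n) ℂ) := Matrix.linftyOpNormedAlgebra
  let _ : NormedAlgebra ℚ (Matrix (Fin n) (Fin n) ℂ) := NormedAlgebra.restrictScalars ℚ ℝ _
  exact NormedSpace.exp_continuous

lemma inv_cj {V : Matrix (Fin n) (Fin n) ℂ} (hV : IsU V) (x : Fin n → ℝ) :
    (cj V (fun i => Real.exp (x i)))⁻¹ = cj V (fun i => Real.exp (-x i)) := by
  apply inv_eq_left_inv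
  rw [cj_mul hV, ← cj_one hV]
  congr 1; funext i
  rw [← Real.exp_add]; simp

lemma trace_cj1 {V : Matrix (Fin n) (Fin n) ℂ} (hV : IsU V) (x : Fin n → ℝ) :
    (trace (cj V x)).re = ∑ i, x i := by
  have := trace_same hV (fun _ => 1) x
  rw [cj_one hV, Matrix.one_mul] at this
  simpa using this

lemma rel_log {A Y : Matrix (Fin n) (Fin n) ℂ} (hA : A.PosDef) (hY : Y.PosDef) :
    ∃ V x, IsU V ∧ Antitone x ∧ A⁻¹ * Y * A⁻¹ = cj V (fun i => Real.exp (x i)) ∧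
      A * NormedSpace.exp (cj V x) * A = Y := by
  have hAd : IsUnit A.det := (Matrix.isUnit_iff_isUnit_det A).1 hA.isUnit
  have hi : (A⁻¹)ᴴ = A⁻¹ := hA.inv.1
  have hM : (A⁻¹ * Y * A⁻¹).PosDef := by
    have := (IsUnit.posDef_star_right_conjugate_iff hA.inv.isUnit).2 hY
    rwa [star_eq_conjTranspose, hi] at this
  obtain ⟨V, x, hV, hx, h⟩ := posDef_log hM
  refine ⟨V, x, hV, hx, h, ?_⟩
  rw [exp_cj hV, ← h]
  calc A * (A⁻¹ * Y * A⁻¹) * A = (A * A⁻¹) * Y * (A⁻¹ * A) := by simp only [Matrix.mul_assoc]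
    _ = Y := by rw [Matrix.mul_nonsing_inv _ hAd, Matrix.nonsing_inv_mul _ hAd]; simp

lemma sq_le_cosh (z : ℝ) : z ^ 2 ≤ Real.exp z + Real.exp (-z) - 2 := by
  have h1 : |z / 2| ≤ |Real.sinh (z / 2)| := by
    rw [Real.abs_sinh]
    exact Real.self_le_sinh_iff.2 (abs_nonneg _)
  have h2 := sq_le_sq.2 h1
  have h3 := Real.cosh_two_mul (z / 2)
  rw [mul_div_cancel₀ _ (two_ne_zero), Real.cosh_sq, Real.cosh_eq] at h3
  nlinarith

variable {v vs : (Fin n → ℝ) → ℝ}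
    {f : Matrix (Fin n) (Fin n) ℂ → ℝ}
    {Gf : Matrix (Fin n) (Fin n) ℂ → Matrix (Fin n) (Fin n) ℂ}

lemma vnorm_vs_nonneg
    (hv_smul : ∀ (c : ℝ) (x : Fin n → ℝ), v (c • x) = |c| * v x)
    (hvs : ∀ x, IsGreatest {r : ℝ | ∃ y : Fin n → ℝ, v y ≤ 1 ∧ r = ∑ i, x i * y i} (vs x))
    (G : Matrix (Fin n) (Fin n) ℂ) : 0 ≤ vnorm vs G := by
  unfold vnorm
  split_ifs
  · exact vs_nonneg hv_smul hvs _
  · exact le_rfl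

lemma G_herm
    (hGf_herm : ∀ X : Matrix (Fin n) (Fin n) ℂ, X.PosDef → (Gf X).IsHermitian)
    {X : Matrix (Fin n) (Fin n) ℂ} (hX : X.PosDef) :
    (matSqrt X * Gf X * matSqrt X).IsHermitian := by
  have := isHermitian_mul_mul_conjTranspose (matSqrt X) (hGf_herm X hX)
  rwa [show (matSqrt X)ᴴ = matSqrt X from (matSqrt_spec hX).1.1] at this

lemma lower
    (hv_eq0 : ∀ x, v x = 0 ↔ x = 0)
    (hv_smul : ∀ (c : ℝ) (x : Fin n → ℝ), v (c • x) = |c| * v x)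
    (hv_add : ∀ x y, v (x + y) ≤ v x + v y)
    (hv_perm : ∀ (σ : Equiv.Perm (Fin n)) (x : Fin n → ℝ), v (x ∘ σ) = v x)
    (hvs : ∀ x, IsGreatest {r : ℝ | ∃ y : Fin n → ℝ, v y ≤ 1 ∧ r = ∑ i, x i * y i} (vs x))
    (hconv : ∀ X : Matrix (Fin n) (Fin n) ℂ, X.PosDef →
      ∀ S : Matrix (Fin n) (Fin n) ℂ, S.IsHermitian →
        ConvexOn ℝ Set.univ (fun t : ℝ => f (matSqrt X * NormedSpace.exp (t • S) * matSqrt X)))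
    (hGf_herm : ∀ X : Matrix (Fin n) (Fin n) ℂ, X.PosDef → (Gf X).IsHermitian)
    (hGf : ∀ X : Matrix (Fin n) (Fin n) ℂ, X.PosDef →
      ∀ H : Matrix (Fin n) (Fin n) ℂ, H.IsHermitian →
        HasDerivAt (fun t : ℝ => f (X + t • H)) ((Matrix.trace (Gf X * H)).re) 0)
    {X Y : Matrix (Fin n) (Fin n) ℂ} (hX : X.PosDef) (hY : Y.PosDef) :
    ∃ V x, IsU V ∧ Antitone x ∧
      (matSqrt X)⁻¹ * Y * (matSqrt X)⁻¹ = cj V (fun i => Real.exp (x i)) ∧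
      f X - vnorm vs (matSqrt X * Gf X * matSqrt X) * v x ≤ f Y := by
  obtain ⟨V, x, hV, hx, h1, h2⟩ := rel_log (matSqrt_spec hX).1 hY
  refine ⟨V, x, hV, hx, h1, ?_⟩
  have h3 := subgrad hconv hGf hX (cj_herm V x)
  rw [h2] at h3
  have h4 := trace_le hv_eq0 hv_smul hv_add hv_perm hvs (G_herm hGf_herm hX) (cj_herm V ((-1 : ℝ) • x))
  rw [vnorm_cj hV _ v hv_perm, hv_smul, ← smul_cj] at h4
  simp at h4
  linarith

lemma weak
    (hv_eq0 : ∀ x, v x = 0 ↔ x = 0)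
    (hv_smul : ∀ (c : ℝ) (x : Fin n → ℝ), v (c • x) = |c| * v x)
    (hv_add : ∀ x y, v (x + y) ≤ v x + v y)
    (hv_perm : ∀ (σ : Equiv.Perm (Fin n)) (x : Fin n → ℝ), v (x ∘ σ) = v x)
    (hvs : ∀ x, IsGreatest {r : ℝ | ∃ y : Fin n → ℝ, v y ≤ 1 ∧ r = ∑ i, x i * y i} (vs x))
    (hconv : ∀ X : Matrix (Fin n) (Fin n) ℂ, X.PosDef →
      ∀ S : Matrix (Fin n) (Fin n) ℂ, S.IsHermitian →
        ConvexOn ℝ Set.univ (fun t : ℝ => f (matSqrt X * NormedSpace.exp (t • S) * matSqrt X)))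
    (hGf_herm : ∀ X : Matrix (Fin n) (Fin n) ℂ, X.PosDef → (Gf X).IsHermitian)
    (hGf : ∀ X : Matrix (Fin n) (Fin n) ℂ, X.PosDef →
      ∀ H : Matrix (Fin n) (Fin n) ℂ, H.IsHermitian →
        HasDerivAt (fun t : ℝ => f (X + t • H)) ((Matrix.trace (Gf X * H)).re) 0)
    {X H : Matrix (Fin n) (Fin n) ℂ} (hX : X.PosDef) (hH : H.IsHermitian) :
    ∃ C : ℝ, ∀ t : ℝ, 0 ≤ t → f X - vnorm vs (matSqrt X * Gf X * matSqrt X) * (C + t * vnorm v H)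
      ≤ f (NormedSpace.exp (t • H)) := by
  obtain ⟨W, h, hW, hh, rfl⟩ := spec hH
  have hA := (matSqrt_spec hX).1
  have hAi := hA.inv
  have hAA : ((matSqrt X)⁻¹ * (matSqrt X)⁻¹).PosDef := by
    have := (IsUnit.posDef_star_right_conjugate_iff hAi.isUnit).2
      (PosDef.one : (1 : Matrix (Fin n) (Fin n) ℂ).PosDef)
    rw [star_eq_conjTranspose, hAi.1, Matrix.mul_one] at this
    exact this
  obtain ⟨U, y, hU, hy, hy1⟩ := posDef_log hAA
  refine ⟨v y, fun t ht => ?_⟩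
  obtain ⟨V, x, hV, hx, h1, h2⟩ := lower hv_eq0 hv_smul hv_add hv_perm hvs hconv hGf_herm hGf hX
    (exp_posDef (cj_herm W (t • h)))
  rw [exp_cj hW] at h1
  have h3 := tri hv_smul hv_add hv_perm hAi hU hW hV hx hy (z := t • h)
    (fun i j hij => by simpa using mul_le_mul_of_nonneg_left (hh hij) ht) hy1 h1
  rw [hv_smul, abs_of_nonneg ht] at h3
  rw [vnorm_cj hW _ v hv_perm, smul_cj]
  have := mul_le_mul_of_nonneg_left h3 (vnorm_vs_nonneg hv_smul hvs (matSqrt X * Gf X * matSqrt X))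
  linarith

lemma lsc_aux
    (hv_eq0 : ∀ x, v x = 0 ↔ x = 0)
    (hv_smul : ∀ (c : ℝ) (x : Fin n → ℝ), v (c • x) = |c| * v x)
    (hv_add : ∀ x y, v (x + y) ≤ v x + v y)
    (hv_perm : ∀ (σ : Equiv.Perm (Fin n)) (x : Fin n → ℝ), v (x ∘ σ) = v x)
    (hvs : ∀ x, IsGreatest {r : ℝ | ∃ y : Fin n → ℝ, v y ≤ 1 ∧ r = ∑ i, x i * y i} (vs x))
    (hconv : ∀ X : Matrix (Fin n) (Fin n) ℂ, X.PosDef →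
      ∀ S : Matrix (Fin n) (Fin n) ℂ, S.IsHermitian →
        ConvexOn ℝ Set.univ (fun t : ℝ => f (matSqrt X * NormedSpace.exp (t • S) * matSqrt X)))
    (hGf_herm : ∀ X : Matrix (Fin n) (Fin n) ℂ, X.PosDef → (Gf X).IsHermitian)
    (hGf : ∀ X : Matrix (Fin n) (Fin n) ℂ, X.PosDef →
      ∀ H : Matrix (Fin n) (Fin n) ℂ, H.IsHermitian →
        HasDerivAt (fun t : ℝ => f (X + t • H)) ((Matrix.trace (Gf X * H)).re) 0)
    {K0 : Matrix (Fin n) (Fin n) ℂ} (hK0 : K0.IsHermitian) :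
    ∃ l : Matrix (Fin n) (Fin n) ℂ → ℝ, Continuous l ∧ l K0 = f (NormedSpace.exp K0) ∧
      ∀ K, K.IsHermitian → l K ≤ f (NormedSpace.exp K) := by
  have hX := exp_posDef hK0
  set X := NormedSpace.exp K0 with hXd
  obtain ⟨hA, hAA⟩ := matSqrt_spec hX
  have hAd : IsUnit (matSqrt X).det := (Matrix.isUnit_iff_isUnit_det _).1 hA.isUnit
  obtain ⟨c, hc, hcv⟩ := v_le_sqrt hv_smul hv_add
  have hN := vnorm_vs_nonneg hv_smul hvs (matSqrt X * Gf X * matSqrt X)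
  set N := vnorm vs (matSqrt X * Gf X * matSqrt X) with hNd
  set A := matSqrt X with hAdef
  refine ⟨fun K => f X - N * (c * √((trace (A⁻¹ * NormedSpace.exp K * A⁻¹)).re +
    (trace (A * NormedSpace.exp (-K) * A)).re - 2 * n)), ?_, ?_, ?_⟩
  · have e1 := exp_cont (n := n)
    have e2 : Continuous (fun K : Matrix (Fin n) (Fin n) ℂ => NormedSpace.exp (-K)) :=
      e1.comp continuous_neg
    have e3 : Continuous (fun K : Matrix (Fin n) (Fin n) ℂ =>
        (trace (A⁻¹ * NormedSpace.exp K * A⁻¹)).re) :=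
      Complex.continuous_re.comp ((continuous_const.matrix_mul e1).matrix_mul
        continuous_const).matrix_trace
    have e4 : Continuous (fun K : Matrix (Fin n) (Fin n) ℂ =>
        (trace (A * NormedSpace.exp (-K) * A)).re) :=
      Complex.continuous_re.comp ((continuous_const.matrix_mul e2).matrix_mul
        continuous_const).matrix_trace
    exact continuous_const.sub (continuous_const.mul (continuous_const.mul
      (Real.continuous_sqrt.comp ((e3.add e4).sub continuous_const))))
  · have e1 : A⁻¹ * NormedSpace.exp K0 * A⁻¹ = 1 := by
      rw [← hXd, ← hAA, ← Matrix.mul_assoc, Matrix.nonsing_inv_mul _ hAd, Matrix.one_mul,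
        Matrix.mul_nonsing_inv _ hAd]
    have e2 : A * NormedSpace.exp (-K0) * A = 1 := by
      rw [Matrix.exp_neg, ← hXd, ← hAA, Matrix.mul_inv_rev, ← Matrix.mul_assoc,
        Matrix.mul_nonsing_inv _ hAd, Matrix.one_mul, Matrix.nonsing_inv_mul _ hAd]
    simp only [e1, e2]
    simp [trace_one]
    right; right
    ring_nf
    exact Real.sqrt_zero
  · intro K hK
    obtain ⟨V, x, hV, hx, h1, h2⟩ := lower hv_eq0 hv_smul hv_add hv_perm hvs hconv hGf_herm hGf hX
      (exp_posDef hK)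
    refine le_trans ?_ h2
    have h3 : A * NormedSpace.exp (-K) * A = cj V (fun i => Real.exp (-x i)) := by
      rw [← inv_cj hV, ← h1, Matrix.mul_inv_rev, Matrix.mul_inv_rev,
        Matrix.nonsing_inv_nonsing_inv _ hAd, Matrix.exp_neg, Matrix.mul_assoc]
    simp only [← hAdef] at h1 ⊢
    rw [h1, h3, trace_cj1 hV, trace_cj1 hV]
    have h4 : ∑ i, x i ^ 2 ≤ ∑ i, Real.exp (x i) + ∑ i, Real.exp (-x i) - 2 * n := by
      calc ∑ i, x i ^ 2 ≤ ∑ i, (Real.exp (x i) + Real.exp (-x i) - 2) :=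
            Finset.sum_le_sum fun i _ => sq_le_cosh _
        _ = _ := by rw [Finset.sum_sub_distrib, Finset.sum_add_distrib]; simp; ring
    have h5 := (hcv x).trans (mul_le_mul_of_nonneg_left (Real.sqrt_le_sqrt h4) hc)
    have h6 := mul_le_mul_of_nonneg_left h5 hN
    linarith

lemma descent
    (hv_eq0 : ∀ x, v x = 0 ↔ x = 0)
    (hv_smul : ∀ (c : ℝ) (x : Fin n → ℝ), v (c • x) = |c| * v x)
    (hv_add : ∀ x y, v (x + y) ≤ v x + v y)
    (hv_perm : ∀ (σ : Equiv.Perm (Fin n)) (x : Fin n → ℝ), v (x ∘ σ) = v x)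
    (hvs : ∀ x, IsGreatest {r : ℝ | ∃ y : Fin n → ℝ, v y ≤ 1 ∧ r = ∑ i, x i * y i} (vs x))
    (hconv : ∀ X : Matrix (Fin n) (Fin n) ℂ, X.PosDef →
      ∀ S : Matrix (Fin n) (Fin n) ℂ, S.IsHermitian →
        ConvexOn ℝ Set.univ (fun t : ℝ => f (matSqrt X * NormedSpace.exp (t • S) * matSqrt X)))
    (hGf_herm : ∀ X : Matrix (Fin n) (Fin n) ℂ, X.PosDef → (Gf X).IsHermitian)
    (hGf : ∀ X : Matrix (Fin n) (Fin n) ℂ, X.PosDef →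
      ∀ H : Matrix (Fin n) (Fin n) ℂ, H.IsHermitian →
        HasDerivAt (fun t : ℝ => f (X + t • H)) ((Matrix.trace (Gf X * H)).re) 0)
    {R m : ℝ} (hR : 0 < R) (hm : 0 ≤ m)
    (hN : ∀ X : Matrix (Fin n) (Fin n) ℂ, X.PosDef →
      m < vnorm vs (matSqrt X * Gf X * matSqrt X)) :
    ∃ K : Matrix (Fin n) (Fin n) ℂ, K.IsHermitian ∧ vnorm v K = R ∧
      f (NormedSpace.exp K) ≤ f 1 - m * R := by
  have h0 : vnorm v (0 : Matrix (Fin n) (Fin n) ℂ) = 0 := by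
    have := vnorm_smul hv_smul hv_perm (isHermitian_zero (n := Fin n) (α := ℂ)) 0
    simpa using this
  set g : Matrix (Fin n) (Fin n) ℂ → ℝ := fun K => f (NormedSpace.exp K) + m * vnorm v K with hg
  set D := {H : Matrix (Fin n) (Fin n) ℂ | H.IsHermitian ∧ vnorm v H ≤ R} with hD
  have hlsc : LowerSemicontinuousOn g D := by
    rintro K0 ⟨hK0, -⟩ y hy
    obtain ⟨l, hl, hl0, hlK⟩ := lsc_aux hv_eq0 hv_smul hv_add hv_perm hvs hconv hGf_herm hGf hK0
    obtain ⟨B, hB0, hB⟩ := support hv_smul hv_add hv_perm hK0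
    have hcont : Continuous (fun K : Matrix (Fin n) (Fin n) ℂ => l K + m * (trace (B * K)).re) :=
      hl.add (continuous_const.mul (Complex.continuous_re.comp
        (continuous_const.matrix_mul continuous_id).matrix_trace))
    have hev : ∀ᶠ K in 𝓝[D] K0, y < l K + m * (trace (B * K)).re := by
      refine (hcont.continuousAt.eventually (lt_mem_nhds ?_)).filter_mono nhdsWithin_le_nhds
      change y < l K0 + m * (trace (B * K0)).re
      rw [hl0, hB0]
      exact hy
    filter_upwards [hev, self_mem_nhdsWithin] with K h1 h2
    have := mul_le_mul_of_nonneg_left (hB K h2.1) hm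
    have := hlK K h2.1
    simp only [hg]
    linarith
  have h0D : (0 : Matrix (Fin n) (Fin n) ℂ) ∈ D := ⟨isHermitian_zero, by rw [h0]; exact hR.le⟩
  obtain ⟨K, hKD, hmin⟩ := hlsc.exists_isMinOn ⟨0, h0D⟩
    (ball_compact hv_eq0 hv_smul hv_add hv_perm hvs R)
  obtain ⟨hK, hKR⟩ := hKD
  rcases hKR.eq_or_lt with he | hlt
  · refine ⟨K, hK, he, ?_⟩
    have := hmin h0D
    simp only [hg, Set.mem_ofPred_eq, he, h0, NormedSpace.exp_zero] at this
    linarith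
  exfalso
  have hX := exp_posDef hK
  obtain ⟨U, k, hU, hk, hKk⟩ := spec hK
  obtain ⟨hA, hAA⟩ := matSqrt_spec hX
  obtain ⟨S, hS, hS1, hSG⟩ := vs_attain hv_perm hvs (G_herm hGf_herm hX)
  have hNX := hN _ hX
  have hS' : ((-1 : ℝ) • S).IsHermitian := by
    obtain ⟨W, z, hW, hz, rfl⟩ := spec hS
    rw [smul_cj]; exact cj_herm _ _
  have hS'1 : vnorm v ((-1 : ℝ) • S) ≤ 1 := by
    rw [vnorm_smul hv_smul hv_perm hS]; simpa using hS1
  have hd := deriv_geo hconv hGf hX hS'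
  have htr : (trace (matSqrt (NormedSpace.exp K) * Gf (NormedSpace.exp K) *
      matSqrt (NormedSpace.exp K) * ((-1 : ℝ) • S))).re =
      - vnorm vs (matSqrt (NormedSpace.exp K) * Gf (NormedSpace.exp K) *
      matSqrt (NormedSpace.exp K)) := by
    rw [← hSG]; simp
  rw [htr] at hd
  generalize ((-1 : ℝ) • S) = Z at hS' hS'1 hd
  obtain ⟨W, z, hW, hz, rfl⟩ := spec hS'
  rw [vnorm_cj hW _ v hv_perm] at hS'1
  have hvK : vnorm v K = v k := by rw [hKk, vnorm_cj hU _ v hv_perm]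
  have hbound : ∀ s : ℝ, 0 < s → s < R - v k →
      -m ≤ s⁻¹ • (f (matSqrt (NormedSpace.exp K) * NormedSpace.exp ((0 + s) • cj W z) *
        matSqrt (NormedSpace.exp K)) - f (matSqrt (NormedSpace.exp K) *
          NormedSpace.exp ((0 : ℝ) • cj W z) * matSqrt (NormedSpace.exp K))) := by
    intro s hs hsR
    rw [zero_add, zero_smul, NormedSpace.exp_zero, Matrix.mul_one, hAA, smul_cj]
    have hY : (matSqrt (NormedSpace.exp K) * NormedSpace.exp (cj W (s • z)) *
        matSqrt (NormedSpace.exp K)).PosDef := by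
      have := (IsUnit.posDef_star_right_conjugate_iff hA.isUnit).2 (exp_posDef (cj_herm W (s • z)))
      rwa [star_eq_conjTranspose, hA.1] at this
    obtain ⟨V, x, hV, hx, h1⟩ := posDef_log hY
    have h2 := tri hv_smul hv_add hv_perm hA hU hW hV hx hk (z := s • z)
      (fun i j hij => by simpa using mul_le_mul_of_nonneg_left (hz hij) hs.le)
      (by rw [hAA, hKk, exp_cj hU]) (by rw [← h1, exp_cj hW])
    rw [hv_smul, abs_of_pos hs] at h2
    have h3 : v x ≤ v k + s := by nlinarith
    have hxD : cj V x ∈ D := ⟨cj_herm _ _, by rw [vnorm_cj hV _ v hv_perm]; linarith⟩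
    have h4 := hmin hxD
    simp only [hg, Set.mem_ofPred_eq, vnorm_cj hV _ v hv_perm, hvK, exp_cj hV] at h4
    rw [h1, smul_eq_mul, inv_mul_eq_div, le_div_iff₀ hs]
    nlinarith
  have hlim := hd.tendsto_slope_zero_right
  have hge : -m ≤ - vnorm vs (matSqrt (NormedSpace.exp K) * Gf (NormedSpace.exp K) *
      matSqrt (NormedSpace.exp K)) := by
    refine ge_of_tendsto hlim ?_
    have hpos : 0 < R - v k := by rw [← hvK]; linarith
    filter_upwards [Ioo_mem_nhdsGT hpos] with s hs
    exact hbound s hs.1 hs.2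
  linarith

lemma slope_mono
    (hconv : ∀ X : Matrix (Fin n) (Fin n) ℂ, X.PosDef →
      ∀ S : Matrix (Fin n) (Fin n) ℂ, S.IsHermitian →
        ConvexOn ℝ Set.univ (fun t : ℝ => f (matSqrt X * NormedSpace.exp (t • S) * matSqrt X)))
    {H : Matrix (Fin n) (Fin n) ℂ} (hH : H.IsHermitian) {s t : ℝ} (hs : 0 < s)
    (hst : s ≤ t) :
    (f (NormedSpace.exp (s • H)) - f 1) / s ≤ (f (NormedSpace.exp (t • H)) - f 1) / t := by
  have h := (conv_one hconv hH).secant_mono (a := 0) (x := s) (y := t) (Set.mem_univ _)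
    (Set.mem_univ _) (Set.mem_univ _) hs.ne' (hs.trans_le hst).ne' hst
  simpa using h

lemma exists_dir
    (hv_eq0 : ∀ x, v x = 0 ↔ x = 0)
    (hv_smul : ∀ (c : ℝ) (x : Fin n → ℝ), v (c • x) = |c| * v x)
    (hv_add : ∀ x y, v (x + y) ≤ v x + v y)
    (hv_perm : ∀ (σ : Equiv.Perm (Fin n)) (x : Fin n → ℝ), v (x ∘ σ) = v x)
    (hvs : ∀ x, IsGreatest {r : ℝ | ∃ y : Fin n → ℝ, v y ≤ 1 ∧ r = ∑ i, x i * y i} (vs x))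
    (hconv : ∀ X : Matrix (Fin n) (Fin n) ℂ, X.PosDef →
      ∀ S : Matrix (Fin n) (Fin n) ℂ, S.IsHermitian →
        ConvexOn ℝ Set.univ (fun t : ℝ => f (matSqrt X * NormedSpace.exp (t • S) * matSqrt X)))
    (hGf_herm : ∀ X : Matrix (Fin n) (Fin n) ℂ, X.PosDef → (Gf X).IsHermitian)
    (hGf : ∀ X : Matrix (Fin n) (Fin n) ℂ, X.PosDef →
      ∀ H : Matrix (Fin n) (Fin n) ℂ, H.IsHermitian →
        HasDerivAt (fun t : ℝ => f (X + t • H)) ((Matrix.trace (Gf X * H)).re) 0)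
    {m : ℝ} (hm : 0 < m)
    (hN : ∀ X : Matrix (Fin n) (Fin n) ℂ, X.PosDef →
      m ≤ vnorm vs (matSqrt X * Gf X * matSqrt X)) :
    ∃ H : Matrix (Fin n) (Fin n) ℂ, H.IsHermitian ∧ vnorm v H ≤ 1 ∧
      ∀ t : ℝ, 0 < t → f (NormedSpace.exp (t • H)) ≤ f 1 - m * t := by
  have hk : ∀ k : ℕ, ∃ H : Matrix (Fin n) (Fin n) ℂ, (H.IsHermitian ∧ vnorm v H ≤ 1) ∧
      ∀ t : ℝ, 0 < t → t ≤ k + 1 →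
        f (NormedSpace.exp (t • H)) ≤ f 1 - m * (1 - 1 / ((k : ℝ) + 1)) * t := by
    intro k
    have hk0 : (0 : ℝ) < k + 1 := by positivity
    have hk1 : 1 / ((k : ℝ) + 1) ≤ 1 := by
      rw [div_le_one hk0]; linarith [Nat.cast_nonneg (α := ℝ) k]
    have hk2 : 0 < 1 / ((k : ℝ) + 1) := by positivity
    obtain ⟨K, hK, hKR, hKf⟩ := descent hv_eq0 hv_smul hv_add hv_perm hvs hconv hGf_herm hGf
      hk0 (m := m * (1 - 1 / ((k : ℝ) + 1))) (mul_nonneg hm.le (by linarith))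
      (fun X hX => lt_of_lt_of_le (by nlinarith) (hN X hX))
    have hKh : (((k : ℝ) + 1)⁻¹ • K).IsHermitian := by
      obtain ⟨W, z, hW, hz, rfl⟩ := spec hK
      rw [smul_cj]; exact cj_herm _ _
    refine ⟨((k : ℝ) + 1)⁻¹ • K, ⟨hKh, ?_⟩, fun t ht htk => ?_⟩
    · rw [vnorm_smul hv_smul hv_perm hK, hKR, abs_of_pos (inv_pos.2 hk0), inv_mul_cancel₀ hk0.ne']
    · have h1 := slope_mono hconv hKh ht htk
      rw [smul_smul ((k : ℝ) + 1), mul_inv_cancel₀ hk0.ne', one_smul] at h1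
      have h2 : (f (NormedSpace.exp K) - f 1) / ((k : ℝ) + 1) ≤ -(m * (1 - 1 / ((k : ℝ) + 1))) := by
        rw [div_le_iff₀ hk0]; linarith
      have h3 := h1.trans h2
      rw [div_le_iff₀ ht] at h3
      linarith
  choose H hH1 hH2 using hk
  have : FirstCountableTopology (Matrix (Fin n) (Fin n) ℂ) :=
    inferInstanceAs (FirstCountableTopology (Fin n → Fin n → ℂ))
  obtain ⟨H0, hH0, φ, hφ, hlim⟩ :=
    (ball_compact hv_eq0 hv_smul hv_add hv_perm hvs 1).tendsto_subseq hH1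
  refine ⟨H0, hH0.1, hH0.2, fun t ht => ?_⟩
  have htH : ∀ {K : Matrix (Fin n) (Fin n) ℂ}, K.IsHermitian → (t • K).IsHermitian := by
    intro K hK
    obtain ⟨W, z, hW, hz, rfl⟩ := spec hK
    rw [smul_cj]; exact cj_herm _ _
  obtain ⟨l, hl, hl0, hlK⟩ := lsc_aux hv_eq0 hv_smul hv_add hv_perm hvs hconv hGf_herm hGf
    (htH hH0.1)
  rw [← hl0]
  have hlim1 : Tendsto (fun k => l (t • H (φ k))) atTop (𝓝 (l (t • H0))) :=
    (hl.tendsto _).comp (hlim.const_smul t)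
  have hlim2 : Tendsto (fun k => f 1 - m * (1 - 1 / ((φ k : ℝ) + 1)) * t) atTop
      (𝓝 (f 1 - m * (1 - 0) * t)) := by
    have h1 : Tendsto (fun k => 1 / ((φ k : ℝ) + 1)) atTop (𝓝 0) :=
      tendsto_one_div_add_atTop_nhds_zero_nat.comp hφ.tendsto_atTop
    exact tendsto_const_nhds.sub (((tendsto_const_nhds.sub h1).const_mul m).mul_const t)
  rw [sub_zero, mul_one] at hlim2
  refine le_of_tendsto_of_tendsto hlim1 hlim2 ?_
  have hbig : ∀ᶠ k in atTop, t ≤ ((φ k : ℕ) : ℝ) :=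
    (tendsto_natCast_atTop_atTop.comp hφ.tendsto_atTop).eventually_ge_atTop t
  filter_upwards [hbig] with k hk
  exact (hlK _ (htH (hH1 _).1)).trans (hH2 _ t ht (by linarith))

end fin
/-- Duality of the minimum dual gradient norm: `inf_X ‖X^{1/2} ∇f(X) X^{1/2}‖_{v*}` equals
`sup { -f^∞(H) : H Hermitian, ‖H‖_v ≤ 1 }`, where `f^∞(H) = lim_{t→∞} (f(e^{tH}) - f(I))/t`. -/
theorem duality_min_gradient_norm {n : ℕ} (v vs : (Fin n → ℝ) → ℝ)
    (hv_eq0 : ∀ x, v x = 0 ↔ x = 0)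
    (hv_smul : ∀ (c : ℝ) (x : Fin n → ℝ), v (c • x) = |c| * v x)
    (hv_add : ∀ x y, v (x + y) ≤ v x + v y)
    (hv_perm : ∀ (σ : Equiv.Perm (Fin n)) (x : Fin n → ℝ), v (x ∘ σ) = v x)
    (hvs : ∀ x, IsGreatest {r : ℝ | ∃ y : Fin n → ℝ, v y ≤ 1 ∧ r = ∑ i, x i * y i} (vs x))
    (f : Matrix (Fin n) (Fin n) ℂ → ℝ)
    (hconv : ∀ X : Matrix (Fin n) (Fin n) ℂ, X.PosDef →
      ∀ S : Matrix (Fin n) (Fin n) ℂ, S.IsHermitian →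
        ConvexOn ℝ Set.univ (fun t : ℝ => f (matSqrt X * NormedSpace.exp (t • S) * matSqrt X)))
    (Gf : Matrix (Fin n) (Fin n) ℂ → Matrix (Fin n) (Fin n) ℂ)
    (hGf_herm : ∀ X : Matrix (Fin n) (Fin n) ℂ, X.PosDef → (Gf X).IsHermitian)
    (hGf : ∀ X : Matrix (Fin n) (Fin n) ℂ, X.PosDef →
      ∀ H : Matrix (Fin n) (Fin n) ℂ, H.IsHermitian →
        HasDerivAt (fun t : ℝ => f (X + t • H)) ((Matrix.trace (Gf X * H)).re) 0) :
    sInf {r : ℝ | ∃ X : Matrix (Fin n) (Fin n) ℂ, X.PosDef ∧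
        r = vnorm vs (matSqrt X * Gf X * matSqrt X)}
      = sSup {r : ℝ | ∃ H : Matrix (Fin n) (Fin n) ℂ, H.IsHermitian ∧ vnorm v H ≤ 1 ∧
          Tendsto (fun t : ℝ => (f (NormedSpace.exp (t • H)) - f 1) / t) atTop (𝓝 (-r))} := by
  set SI := {r : ℝ | ∃ X : Matrix (Fin n) (Fin n) ℂ, X.PosDef ∧
        r = vnorm vs (matSqrt X * Gf X * matSqrt X)} with hSI
  set T := {r : ℝ | ∃ H : Matrix (Fin n) (Fin n) ℂ, H.IsHermitian ∧ vnorm v H ≤ 1 ∧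
          Tendsto (fun t : ℝ => (f (NormedSpace.exp (t • H)) - f 1) / t) atTop (𝓝 (-r))} with hT
  have hne : SI.Nonempty := ⟨_, 1, PosDef.one, rfl⟩
  have hbd : BddBelow SI := by
    refine ⟨0, ?_⟩
    rintro r ⟨X, -, rfl⟩
    exact vnorm_vs_nonneg hv_smul hvs _
  -- weak bound on slopes
  have hweak : ∀ X : Matrix (Fin n) (Fin n) ℂ, X.PosDef → ∀ H : Matrix (Fin n) (Fin n) ℂ,
      H.IsHermitian → vnorm v H ≤ 1 → ∃ C : ℝ, ∀ t : ℝ, 0 < t →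
        C / t - vnorm vs (matSqrt X * Gf X * matSqrt X) ≤
          (f (NormedSpace.exp (t • H)) - f 1) / t := by
    intro X hX H hH hH1
    obtain ⟨C, hC⟩ := weak hv_eq0 hv_smul hv_add hv_perm hvs hconv hGf_herm hGf hX hH
    have hN := vnorm_vs_nonneg hv_smul hvs (matSqrt X * Gf X * matSqrt X)
    refine ⟨f X - f 1 - vnorm vs (matSqrt X * Gf X * matSqrt X) * C, fun t ht => ?_⟩
    rw [div_sub' ht.ne']
    refine div_le_div_of_nonneg_right ?_ ht.le
    have h1 := hC t ht.le
    have h2 := mul_le_mul_of_nonneg_left (mul_le_mul_of_nonneg_left hH1 ht.le) hN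
    linarith
  have hlimC : ∀ C N : ℝ, Tendsto (fun t : ℝ => C / t - N) atTop (𝓝 (-N)) := by
    intro C N
    have := (tendsto_const_nhds (x := C)).div_atTop tendsto_id
    simpa using this.sub_const N
  have hle : ∀ r ∈ T, ∀ s ∈ SI, r ≤ s := by
    rintro r ⟨H, hH, hH1, hlim⟩ s ⟨X, hX, rfl⟩
    obtain ⟨C, hC⟩ := hweak X hX H hH hH1
    have := le_of_tendsto_of_tendsto (hlimC C _) hlim
      ((eventually_gt_atTop 0).mono fun t ht => hC t ht)
    linarith
  have hex : ∃ r ∈ T, sInf SI ≤ r := by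
    have hm0 : 0 ≤ sInf SI := le_csInf hne (by
      rintro r ⟨X, -, rfl⟩
      exact vnorm_vs_nonneg hv_smul hvs _)
    rcases hm0.eq_or_lt with h0 | hpos
    · refine ⟨0, ⟨0, isHermitian_zero, ?_, ?_⟩, h0.symm.le⟩
      · have := vnorm_smul hv_smul hv_perm (isHermitian_zero (n := Fin n) (α := ℂ)) 0
        simp only [smul_zero, abs_zero, zero_mul] at this
        rw [this]; exact zero_le_one
      · simp
    · obtain ⟨H, hH, hH1, hf⟩ := exists_dir hv_eq0 hv_smul hv_add hv_perm hvs hconv hGf_herm hGf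
        hpos (fun X hX => csInf_le hbd ⟨X, hX, rfl⟩)
      have hup : ∀ t : ℝ, 0 < t → (f (NormedSpace.exp (t • H)) - f 1) / t ≤ -sInf SI := by
        intro t ht
        rw [div_le_iff₀ ht]
        linarith [hf t ht]
      set q : ℝ → ℝ := fun t => (f (NormedSpace.exp (t • H)) - f 1) / t with hq
      have hmono : Monotone (fun t : ℝ => q (max t 1)) := by
        intro a b hab
        exact slope_mono hconv hH (lt_of_lt_of_le zero_lt_one (le_max_right _ _))
          (max_le_max_right _ hab)
      have hbdd : BddAbove (Set.range (fun t : ℝ => q (max t 1))) := by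
        refine ⟨-sInf SI, ?_⟩
        rintro _ ⟨t, rfl⟩
        exact hup _ (lt_of_lt_of_le zero_lt_one (le_max_right _ _))
      have hlim := tendsto_atTop_ciSup hmono hbdd
      set L := ⨆ t : ℝ, q (max t 1) with hL
      have hlim2 : Tendsto q atTop (𝓝 L) := by
        refine hlim.congr' ?_
        filter_upwards [eventually_ge_atTop 1] with t ht
        rw [max_eq_left ht]
      have hLle : L ≤ -sInf SI := le_of_tendsto hlim2
        ((eventually_gt_atTop 0).mono fun t ht => hup t ht)
      exact ⟨-L, ⟨H, hH, hH1, by rw [neg_neg]; exact hlim2⟩, by linarith⟩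
  obtain ⟨r, hrT, hr⟩ := hex
  apply le_antisymm
  · exact hr.trans (le_csSup ⟨sInf SI, fun s hs => le_csInf hne (hle s hs)⟩ hrT)
  · exact csSup_le ⟨r, hrT⟩ fun s hs => le_csInf hne (hle s hs)
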